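/- arXiv:1312.1714 — 2 statements merged into one kernel-verified Lean document; each statement's English description precedes it below -/
import Mathlib

section
/- Fix an integer n ≥ 2. There exists a constant C > 0, independent of p and Λ, such that for every prime p and every positive definite matrix Λ ∈ M_{n,n}(ℤ) with p ∤ det(Λ), one has ν_p(I_{n+1}, Λ) ≤ 1 + C/p². -/
open scoped ENNReal

/-- `ν_p(I_{n+1}, Λ)`: the limit superior, as `r → ∞`, of
`p^{-r(mn - n(n+1)/2)}` (with `m = n+1`, so the exponent is `r·n(n+1)/2`) times the
number of matrices `L ∈ M_{m,n}(ℤ/p^rℤ)` with `Lᵀ L ≡ Λ (mod p^r)`. -/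
noncomputable def nuId (p n : ℕ) (Λ : Matrix (Fin n) (Fin n) ℤ) : ℝ≥0∞ :=
  Filter.limsup (fun r : ℕ =>
    (Nat.card {L : Matrix (Fin (n + 1)) (Fin n) (ZMod (p ^ r)) //
        L.transpose * L = Λ.map (Int.cast : ℤ → ZMod (p ^ r))} : ℝ≥0∞) /
      (p : ℝ≥0∞) ^ (r * ((n + 1) * n - n * (n + 1) / 2))) Filter.atTop

/-!
Since `det Λ` is prime to `p`, every symmetric matrix congruent to `Λ` modulo `p ^ e` (where
`8 ∣ p ^ e` if `p = 2`) is `Uᵀ Λ U` with `U` invertible, hence has at least as many representations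
as `Λ`. So the normalised number of representations modulo `p ^ r` is at most the one modulo
`p ^ e`. For `p = 2` the trivial bound modulo `8` is enough, as the constant may be large.

For odd `p` the count takes place over `𝔽_q` with `q = p`. There `Λ` may be taken diagonal, and a
representation is an orthogonal family whose members are chosen one after the other. As long as
the ambient space has dimension `k + 1 ≥ 4`, there are at most `q ^ k (1 + q⁻²)` choices, because
the error term for a quadric is at most `q ^ (k / 2)`. This fails for the last two vectors, but in
a space of dimension three their errors of relative size `1 / q` have opposite signs, and the
number of pairs is at most `q ^ 3`.
-/

section CommRing

open Matrix

variable {m n R S : Type*} [Fintype m] [CommRing R] [CommRing S]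

/-- The number of representations of `Λ` by `Q`, that is, of matrices `L` with `Lᵀ Q L = Λ`. -/
noncomputable def repCard (Q : Matrix m m R) (Λ : Matrix n n R) : ℕ :=
  Nat.card {L : Matrix m n R // Lᵀ * Q * L = Λ}

theorem isSymm_of_repCard_ne_zero {Q : Matrix m m R} {Λ : Matrix n n R} (hQ : Q.IsSymm)
    (h : repCard Q Λ ≠ 0) : Λ.IsSymm := by
  obtain ⟨⟨L, rfl⟩⟩ := (Nat.card_ne_zero.1 h).1
  simp [Matrix.IsSymm, hQ.eq, Matrix.mul_assoc]

theorem map_transpose_mul_mul (f : R →+* S) (Q : Matrix m m R) (L : Matrix m n R) :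
    (Lᵀ * Q * L).map f = (L.map f)ᵀ * Q.map f * L.map f := by
  rw [Matrix.map_mul, Matrix.map_mul, transpose_map]

theorem repCard_le_card_pow [Fintype n] [Finite R] (Q : Matrix m m R) (Λ : Matrix n n R) :
    repCard Q Λ ≤ Nat.card R ^ (Fintype.card m * Fintype.card n) := by
  calc repCard Q Λ ≤ Nat.card (Matrix m n R) :=
        Nat.card_le_card_of_injective _ Subtype.val_injective
    _ = Nat.card R ^ (Fintype.card m * Fintype.card n) := by
        simp [Matrix, Nat.card_fun, ← pow_mul, mul_comm]

theorem transpose_mul_mul_mul [Fintype n] (Q : Matrix m m R) (L : Matrix m n R)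
    (U : Matrix n n R) : (L * U)ᵀ * Q * (L * U) = Uᵀ * (Lᵀ * Q * L) * U := by
  simp only [transpose_mul, Matrix.mul_assoc]

theorem repCard_le_repCard_of_isUnit [Fintype n] [DecidableEq n] [Finite R] (Q : Matrix m m R)
    (Λ : Matrix n n R) {U : Matrix n n R} (hU : IsUnit U) :
    repCard Q Λ ≤ repCard Q (Uᵀ * Λ * U) := by
  refine Nat.card_le_card_of_injective
    (fun L => ⟨L.1 * U, by rw [transpose_mul_mul_mul, L.2]⟩) fun L L' h => Subtype.ext ?_
  have := hU.invertible
  exact mul_left_injective_of_invertible U (congrArg Subtype.val h)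

theorem exists_isNilpotent_sq_add_self_eq {x : R} (hx : IsNilpotent x) :
    ∃ z, IsNilpotent z ∧ z ^ 2 + z = x := by
  obtain ⟨z, ⟨hz, h⟩, -⟩ := Polynomial.existsUnique_nilpotent_sub_and_aeval_eq_zero (x := (0 : R))
    (P := Polynomial.X ^ 2 + Polynomial.X - Polynomial.C x) (by simpa using hx) (by simp)
  refine ⟨z, by simpa using hz.neg, ?_⟩
  simpa [sub_eq_zero] using h

theorem mul_aeval_eq_transpose_aeval_mul [Fintype n] [DecidableEq n] {Λ Y : Matrix n n R}
    (h : Λ * Y = Yᵀ * Λ) (f : Polynomial R) :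
    Λ * Polynomial.aeval Y f = (Polynomial.aeval Y f)ᵀ * Λ := by
  induction f using Polynomial.induction_on' with
  | add f g hf hg => simp [Matrix.mul_add, Matrix.add_mul, hf, hg]
  | monomial k a =>
    have hk : Λ * Y ^ k = (Y ^ k)ᵀ * Λ := by
      rw [transpose_pow]
      exact (show SemiconjBy Λ Y Yᵀ from h).pow_right k
    simp [Polynomial.aeval_monomial, Algebra.algebraMap_eq_smul_one, hk]

/-- With `Y = Λ⁻¹ E` and `Z` the polynomial in `c Y` solving `Z ^ 2 + Z = c Y`, the matrix
`U = 1 + 2 Z` is a square root of `1 + 4 c Y`, and it is self-adjoint for `Λ`, so that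
`Uᵀ Λ U = Λ U ^ 2 = Λ + 4 c E`. -/
theorem exists_isUnit_transpose_mul_mul_eq_add_smul [Fintype n] [DecidableEq n] {c : R}
    (hc : IsNilpotent c) {Λ E : Matrix n n R} (hΛ : Λ.IsSymm) (hdet : IsUnit Λ.det)
    (hE : E.IsSymm) : ∃ U, IsUnit U ∧ Uᵀ * Λ * U = Λ + (4 * c) • E := by
  have hcX : IsNilpotent (Polynomial.C c * Polynomial.X) :=
    (Commute.all _ _).isNilpotent_mul_right (hc.map Polynomial.C)
  obtain ⟨f, hf, hfc⟩ := exists_isNilpotent_sq_add_self_eq hcX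
  set Y := Λ⁻¹ * E
  have hΛY : Λ * Y = E := mul_nonsing_inv_cancel_left _ _ hdet
  have hY : Λ * Y = Yᵀ * Λ := by
    rw [← hΛ.eq, ← transpose_mul, hΛ.eq, hΛY, hE.eq]
  set Z := Polynomial.aeval Y f
  have hZ : Z ^ 2 + Z = c • Y := by
    simpa [Algebra.smul_def] using congrArg (Polynomial.aeval Y) hfc
  have hadj : Λ * Z = Zᵀ * Λ := mul_aeval_eq_transpose_aeval_mul hY f
  refine ⟨1 + 2 * Z, ((Commute.ofNat_left _ _).isNilpotent_mul_left
    (hf.map (Polynomial.aeval Y))).isUnit_one_add, ?_⟩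
  calc (1 + 2 * Z)ᵀ * Λ * (1 + 2 * Z) = Λ * (1 + 2 * Z) * (1 + 2 * Z) := by
        simp only [two_mul, transpose_add, transpose_one, add_mul, mul_add, ← hadj, one_mul,
          mul_one]
    _ = Λ + Λ * (4 * (Z ^ 2 + Z)) := by noncomm_ring
    _ = Λ + (4 * c) • E := by
        rw [hZ, ← hΛY, mul_smul_comm, mul_smul_comm, mul_comm 4 c, mul_smul, ofNat_smul_eq_nsmul]
        noncomm_ring

theorem card_map_eq_le [Fintype n] [Finite R] [Finite S] (f : R →+* S) (Q : Matrix m m R)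
    (Λ : Matrix n n R) :
    Nat.card {L : Matrix m n R // (Lᵀ * Q * L).map f = Λ.map f} ≤
      repCard (Q.map f) (Λ.map f) *
        Nat.card (RingHom.ker f) ^ (Fintype.card m * Fintype.card n) := by
  let s := Function.invFun f
  have hs (x : R) : f (s (f x)) = f x := Function.invFun_eq ⟨x, rfl⟩
  let Φ (L : {L : Matrix m n R // (Lᵀ * Q * L).map f = Λ.map f}) :
      {M : Matrix m n S // Mᵀ * Q.map f * M = Λ.map f} × (m → n → RingHom.ker f) :=
    (⟨L.1.map f, by rw [← map_transpose_mul_mul, L.2]⟩,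
      fun i j => ⟨L.1 i j - s (f (L.1 i j)), by simp [RingHom.mem_ker, hs]⟩)
  have hΦ : Function.Injective Φ := fun L L' h => by
    simp only [Φ, Prod.mk.injEq, Subtype.mk.injEq, funext_iff] at h
    ext i j
    have hmap : f (L.1 i j) = f (L'.1 i j) := congrFun (congrFun h.1 i) j
    simpa [hmap] using h.2 i j
  calc _ ≤ _ := Nat.card_le_card_of_injective Φ hΦ
    _ = _ := by simp [repCard, Nat.card_fun, ← pow_mul, mul_comm]

theorem exists_isUnit_transpose_mul_mul_eq_add_of_mem_span [Fintype n] [DecidableEq n] {c : R}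
    (hc : IsNilpotent c) {Λ E : Matrix n n R} (hΛ : Λ.IsSymm) (hdet : IsUnit Λ.det)
    (hE : E.IsSymm) (hEc : ∀ i j, E i j ∈ Ideal.span {4 * c}) :
    ∃ U, IsUnit U ∧ Uᵀ * Λ * U = Λ + E := by
  choose! d hd using fun (x : R) (hx : x ∈ Ideal.span {4 * c}) => Ideal.mem_span_singleton'.1 hx
  obtain ⟨U, hU, h⟩ := exists_isUnit_transpose_mul_mul_eq_add_smul hc hΛ hdet (hE.map d)
  exact ⟨U, hU, h.trans (by ext i j; simp [mul_comm (4 * c), hd _ (hEc i j)])⟩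

/-- The left-hand side counts the pairs of a representation `L` of `Λ` and a symmetric `E` with
entries in the kernel. Writing `Λ + E = Uᵀ Λ U`, the matrix `L U` represents `Λ + E`, and it
determines the pair: first `E` as its Gram matrix minus `Λ`, then `L`. -/
theorem repCard_mul_card_ker_pow_le_card_map_eq [Fintype n] [DecidableEq n] [Finite R]
    (f : R →+* S) {c : R} (hc : IsNilpotent c) (hf : RingHom.ker f ≤ Ideal.span {4 * c})
    {Q : Matrix m m R} (hQ : Q.IsSymm) {Λ : Matrix n n R} (hΛ : IsUnit Λ.det) :
    repCard Q Λ * Nat.card (RingHom.ker f) ^ (Fintype.card n + 1).choose 2 ≤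
      Nat.card {L : Matrix m n R // (Lᵀ * Q * L).map f = Λ.map f} := by
  obtain h | h := eq_or_ne (repCard Q Λ) 0
  · simp [h]
  let E (g : Sym2 n → RingHom.ker f) : Matrix n n R := of fun i j => (g s(i, j) : R)
  have hE : Function.Injective E := fun g g' h => by
    funext z
    induction z with | _ i j => exact Subtype.ext (congrFun (congrFun h i) j)
  have hΛE (g : Sym2 n → RingHom.ker f) : ∃ U, IsUnit U ∧ Uᵀ * Λ * U = Λ + E g :=
    exists_isUnit_transpose_mul_mul_eq_add_of_mem_span hc (isSymm_of_repCard_ne_zero hQ h) hΛ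
      (IsSymm.ext fun i j => by simp [E, Sym2.eq_swap]) fun i j => hf (g s(i, j)).2
  choose U hU hΛE using hΛE
  have hgram (L : {L : Matrix m n R // Lᵀ * Q * L = Λ}) (g : Sym2 n → RingHom.ker f) :
      (L.1 * U g)ᵀ * Q * (L.1 * U g) = Λ + E g := by
    rw [transpose_mul_mul_mul, L.2, hΛE]
  let Φ (z : {L : Matrix m n R // Lᵀ * Q * L = Λ} × (Sym2 n → RingHom.ker f)) :
      {L : Matrix m n R // (Lᵀ * Q * L).map f = Λ.map f} :=
    ⟨z.1.1 * U z.2, by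
      rw [hgram]
      ext i j
      simp [E, RingHom.mem_ker.1 (z.2 s(i, j)).2]⟩
  have hΦ : Function.Injective Φ := by
    rintro ⟨L, g⟩ ⟨L', g'⟩ h
    have h : L.1 * U g = L'.1 * U g' := congrArg Subtype.val h
    obtain rfl : g = g' := hE <| add_left_cancel <| by rw [← hgram L g, ← hgram L' g', h]
    have := (hU g).invertible
    exact Prod.ext (Subtype.ext (mul_left_injective_of_invertible (U g) h)) rfl
  calc _ = Nat.card ({L : Matrix m n R // Lᵀ * Q * L = Λ} × (Sym2 n → RingHom.ker f)) := by
        rw [Nat.card_prod, Nat.card_fun, Nat.card_eq_fintype_card (α := Sym2 n), Sym2.card, repCard]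
    _ ≤ _ := Nat.card_le_card_of_injective Φ hΦ

end CommRing

section ZMod

theorem ker_castHom_le_span {m n : ℕ} (h : m ∣ n) :
    RingHom.ker (ZMod.castHom h (ZMod m)) ≤ Ideal.span {(m : ZMod n)} := fun x hx => by
  obtain ⟨a, rfl⟩ := ZMod.intCast_surjective x
  rw [RingHom.mem_ker, map_intCast, ZMod.intCast_zmod_eq_zero_iff_dvd] at hx
  obtain ⟨b, rfl⟩ := hx
  simpa using Ideal.mul_mem_right _ _ (Ideal.mem_span_singleton_self (m : ZMod n))

theorem card_ker_castHom_mul {m n : ℕ} (h : m ∣ n) :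
    Nat.card (RingHom.ker (ZMod.castHom h (ZMod m))) * m = n := by
  have := AddSubgroup.card_mul_index (ZMod.castHom h (ZMod m)).toAddMonoidHom.ker
  rw [AddSubgroup.index_ker] at this
  have hr : (ZMod.castHom h (ZMod m)).toAddMonoidHom.range = ⊤ :=
    AddMonoidHom.range_eq_top.2 (ZMod.castHom_surjective h)
  rw [hr] at this
  simpa using this

end ZMod

section FiberCard

variable {X Y F : Type*}

/-- The number of solutions of `f x = c`. -/
noncomputable def fiberCard (f : X → F) (c : F) : ℕ := Nat.card {x // f x = c}

theorem fiberCard_congr {f : X → F} {g : Y → F} (e : X ≃ Y) (h : ∀ x, g (e x) = f x) (c : F) :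
    fiberCard f c = fiberCard g c :=
  Nat.card_congr (e.subtypeEquiv fun x => by rw [h])

theorem sum_fiberCard [Finite X] [Fintype F] (f : X → F) : ∑ c, fiberCard f c = Nat.card X := by
  simp only [fiberCard]
  rw [← Nat.card_sigma]
  exact Nat.card_congr (Equiv.sigmaFiberEquiv f)

theorem fiberCard_add [Finite X] [Fintype Y] [AddCommGroup F] (f : X → F) (h : Y → F) (c : F) :
    fiberCard (fun z : X × Y => f z.1 + h z.2) c = ∑ y, fiberCard f (c - h y) := by
  simp only [fiberCard]
  rw [← Nat.card_sigma]
  exact Nat.card_congr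
    { toFun := fun z => ⟨z.1.2, z.1.1, eq_sub_of_add_eq z.2⟩
      invFun := fun z => ⟨(z.2.1, z.1), by simp [z.2.2]⟩
      left_inv := fun _ => rfl
      right_inv := fun _ => rfl }

theorem fiberCard_diagonal_add_two [Semiring F] (k : ℕ) (w : Fin (k + 2) → F) (d : F) :
    fiberCard (fun x : Fin (k + 2) → F => ∑ i, w i * x i ^ 2) d =
      fiberCard (fun z : (F × F) × (Fin k → F) =>
        (w 0 * z.1.1 ^ 2 + w 1 * z.1.2 ^ 2) + ∑ i, w i.succ.succ * z.2 i ^ 2) d := by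
  let e : (Fin (k + 2) → F) ≃ (F × F) × (Fin k → F) :=
    (Fin.consEquiv fun _ => F).symm.trans
      (((Equiv.refl F).prodCongr (Fin.consEquiv fun _ => F).symm).trans
        (Equiv.prodAssoc _ _ _).symm)
  refine fiberCard_congr e (fun x => ?_) d
  simp [e, Fin.sum_univ_succ, Fin.consEquiv, Fin.tail, add_assoc]

variable [Finite X] [Finite F]

theorem fiberCard_zero_of_const [Zero F] {f : X → F} {s : ℤ}
    (hf : ∀ c ≠ 0, (fiberCard f c : ℤ) = s) :
    (fiberCard f 0 : ℤ) = Nat.card X - (Nat.card F - 1) * s := by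
  classical
  have := Fintype.ofFinite F
  have h := congrArg (Nat.cast : ℕ → ℤ) (sum_fiberCard f)
  rw [Nat.cast_sum, ← Finset.add_sum_erase _ _ (Finset.mem_univ (0 : F)),
    Finset.sum_congr rfl fun c hc => hf c (Finset.ne_of_mem_erase hc)] at h
  have hcard : ((Finset.univ.erase (0 : F)).card : ℤ) = Nat.card F - 1 := by
    rw [Finset.card_erase_of_mem (Finset.mem_univ _), Finset.card_univ, Nat.card_eq_fintype_card,
      Nat.cast_pred Fintype.card_pos]
  rw [Finset.sum_const, nsmul_eq_mul, hcard] at h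
  linear_combination h

theorem fiberCard_add_of_const [Finite Y] [AddCommGroup F] {f : X → F} {s : ℤ}
    (hf : ∀ c ≠ 0, (fiberCard f c : ℤ) = s) (h : Y → F) (c : F) :
    (fiberCard (fun z : X × Y => f z.1 + h z.2) c : ℤ) =
      Nat.card Y * s + (Nat.card X - Nat.card F * s) * fiberCard h c := by
  classical
  have := Fintype.ofFinite Y
  have hfc (d : F) : (fiberCard f d : ℤ) =
      s + if d = 0 then (Nat.card X - Nat.card F * s : ℤ) else 0 := by
    split_ifs with hd
    · rw [hd, fiberCard_zero_of_const hf]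
      ring
    · rw [hf d hd, add_zero]
  have hcard : ((Finset.univ.filter fun y => c - h y = 0).card : ℤ) = fiberCard h c := by
    rw [fiberCard, Nat.card_eq_fintype_card, Fintype.card_subtype]
    simp only [sub_eq_zero, eq_comm]
  rw [fiberCard_add, Nat.cast_sum, Finset.sum_congr rfl fun y _ => hfc (c - h y),
    Finset.sum_add_distrib, Finset.sum_const, ← Finset.sum_filter, Finset.sum_const,
    nsmul_eq_mul, nsmul_eq_mul, hcard, Finset.card_univ, ← Nat.card_eq_fintype_card (α := Y)]
  ring

end FiberCard

section Square

variable {F : Type*} [Field F] {a : F}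

theorem fiberCard_mul_sq_le_two (ha : a ≠ 0) (c : F) : fiberCard (fun y => a * y ^ 2) c ≤ 2 := by
  obtain h | ⟨⟨y, rfl⟩⟩ := isEmpty_or_nonempty {y // a * y ^ 2 = c}
  · simp [fiberCard]
  have hsub : {x | a * x ^ 2 = a * y ^ 2} ⊆ {y, -y} := fun x hx =>
    sq_eq_sq_iff_eq_or_eq_neg.1 (mul_left_cancel₀ ha hx)
  exact (Set.ncard_le_ncard hsub).trans ((Set.ncard_insert_le _ _).trans_eq (by simp))

theorem fiberCard_mul_sq_zero (ha : a ≠ 0) : fiberCard (fun y => a * y ^ 2) 0 = 1 := by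
  simp [fiberCard, ha]

theorem fiberCard_mul_sq_self (h2 : (2 : F) ≠ 0) (ha : a ≠ 0) :
    fiberCard (fun y => a * y ^ 2) a = 2 := by
  have hset : {y | a * y ^ 2 = a} = {1, -1} := by
    ext y
    simp [ha, sq_eq_one_iff]
  have hne : (1 : F) ≠ -1 := fun h => h2 (by linear_combination h)
  change Set.ncard {y | a * y ^ 2 = a} = 2
  rw [hset, Set.ncard_pair hne]

end Square

section Binary

variable {F : Type*} [Field F] [Finite F] {a b : F}

theorem exists_sq_add_mul_sq (h2 : (2 : F) ≠ 0) (hb : b ≠ 0) (c : F) :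
    ∃ u v : F, u ^ 2 + b * v ^ 2 = c := by
  have := Fintype.ofFinite F
  have hodd : Fintype.card F % 2 = 1 :=
    FiniteField.odd_card_of_char_ne_two fun h => h2 <| by
      simpa [h] using ringChar.Nat.cast_ringChar (R := F)
  obtain ⟨u, v, h⟩ := FiniteField.exists_root_sum_quadratic
    (f := (Polynomial.X ^ 2 : Polynomial F))
    (g := Polynomial.C b * Polynomial.X ^ 2 + Polynomial.C 0 * Polynomial.X + Polynomial.C (-c))
    (Polynomial.degree_X_pow 2) (Polynomial.degree_quadratic hb) hodd
  simp only [Polynomial.eval_pow, Polynomial.eval_X, Polynomial.eval_add, Polynomial.eval_mul,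
    Polynomial.eval_C] at h
  exact ⟨u, v, by linear_combination h⟩

/-- The norm form `x ^ 2 + e y ^ 2` is multiplicative, and it takes the value `c`. -/
theorem fiberCard_binary_le_mul (h2 : (2 : F) ≠ 0) (ha : a ≠ 0) (hb : b ≠ 0) {c : F}
    (hc : c ≠ 0) (d : F) :
    fiberCard (fun z : F × F => a * z.1 ^ 2 + b * z.2 ^ 2) d ≤
      fiberCard (fun z : F × F => a * z.1 ^ 2 + b * z.2 ^ 2) (c * d) := by
  obtain ⟨e, rfl⟩ : ∃ e, b = a * e := ⟨b / a, by field_simp⟩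
  obtain ⟨u, v, huv⟩ := exists_sq_add_mul_sq h2 (right_ne_zero_of_mul hb) c
  refine Nat.card_le_card_of_injective
    (fun z => ⟨(u * z.1.1 - e * v * z.1.2, v * z.1.1 + u * z.1.2), ?_⟩) ?_
  · linear_combination c * z.2 + (a * z.1.1 ^ 2 + a * e * z.1.2 ^ 2) * huv
  · rintro ⟨⟨x, y⟩, hz⟩ ⟨⟨x', y'⟩, hz'⟩ h
    obtain ⟨h₁, h₂⟩ :
        u * x - e * v * y = u * x' - e * v * y' ∧ v * x + u * y = v * x' + u * y' := by
      simpa using h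
    have hx : c * x = c * x' := by linear_combination u * h₁ + e * v * h₂ - (x - x') * huv
    have hy : c * y = c * y' := by linear_combination u * h₂ - v * h₁ - (y - y') * huv
    simp [mul_left_cancel₀ hc hx, mul_left_cancel₀ hc hy]

theorem fiberCard_binary_eq (h2 : (2 : F) ≠ 0) (ha : a ≠ 0) (hb : b ≠ 0) {c d : F}
    (hc : c ≠ 0) (hd : d ≠ 0) :
    fiberCard (fun z : F × F => a * z.1 ^ 2 + b * z.2 ^ 2) c =
      fiberCard (fun z : F × F => a * z.1 ^ 2 + b * z.2 ^ 2) d := by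
  refine le_antisymm ?_ ?_
  · simpa [hc] using fiberCard_binary_le_mul h2 ha hb (div_ne_zero hd hc) c
  · simpa [hd] using fiberCard_binary_le_mul h2 ha hb (div_ne_zero hc hd) d

theorem fiberCard_binary_zero_add_one_le (ha : a ≠ 0) :
    fiberCard (fun z : F × F => a * z.1 ^ 2 + b * z.2 ^ 2) 0 + 1 ≤ 2 * Nat.card F := by
  classical
  have := Fintype.ofFinite F
  rw [fiberCard_add (fun x : F => a * x ^ 2) (fun x : F => b * x ^ 2),
    ← Finset.add_sum_erase _ _ (Finset.mem_univ (0 : F))]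
  have hle := Finset.sum_le_card_nsmul (Finset.univ.erase (0 : F))
    (fun y => fiberCard (fun x : F => a * x ^ 2) (0 - b * y ^ 2)) 2
    fun y _ => fiberCard_mul_sq_le_two ha _
  have h0 : fiberCard (fun x : F => a * x ^ 2) (0 - b * 0 ^ 2) = 1 := by
    simpa using fiberCard_mul_sq_zero ha
  rw [Finset.card_erase_of_mem (Finset.mem_univ _), Finset.card_univ, smul_eq_mul] at hle
  have := Fintype.card_pos (α := F)
  rw [h0, Nat.card_eq_fintype_card]
  omega

theorem abs_fiberCard_binary_sub_le (h2 : (2 : F) ≠ 0) (ha : a ≠ 0) (hb : b ≠ 0) {c : F}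
    (hc : c ≠ 0) :
    |(fiberCard (fun z : F × F => a * z.1 ^ 2 + b * z.2 ^ 2) c : ℤ) - Nat.card F| ≤ 1 := by
  have hzero := fiberCard_zero_of_const fun d hd =>
    congrArg Nat.cast (fiberCard_binary_eq h2 ha hb hd hc)
  have hup : ((fiberCard (fun z : F × F => a * z.1 ^ 2 + b * z.2 ^ 2) 0 + 1 : ℕ) : ℤ) ≤ _ :=
    Nat.cast_le.2 (fiberCard_binary_zero_add_one_le ha)
  have hlow : 0 < fiberCard (fun z : F × F => a * z.1 ^ 2 + b * z.2 ^ 2) 0 :=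
    Nat.card_pos_iff.2 ⟨⟨0, by simp⟩, inferInstance⟩
  have hq : (1 : ℤ) < Nat.card F := by exact_mod_cast Finite.one_lt_card (α := F)
  rw [Nat.card_prod] at hzero
  push_cast at hzero hup
  rw [abs_le]
  constructor <;> nlinarith

/-- Each binary form split off has a constant count `s` on nonzero values, with `|s - q| ≤ 1`, and
it multiplies the error by `(s - q) q`. -/
theorem abs_fiberCard_diagonal_sub_le (h2 : (2 : F) ≠ 0) (k : ℕ) (w : Fin (k + 1) → F)
    (hw : ∀ i, w i ≠ 0) {d : F} (hd : d ≠ 0) :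
    |(fiberCard (fun x : Fin (k + 1) → F => ∑ i, w i * x i ^ 2) d : ℤ) - Nat.card F ^ k| ≤
      Nat.card F ^ (k / 2) := by
  induction k using Nat.twoStepInduction with
  | zero =>
    rw [fiberCard_congr (Equiv.funUnique (Fin 1) F) (g := fun y => w 0 * y ^ 2)
      (fun x => by simp) d]
    have := fiberCard_mul_sq_le_two (hw 0) d
    simp only [pow_zero, Nat.zero_div, abs_le]
    omega
  | one =>
    rw [fiberCard_congr (finTwoArrowEquiv F) (g := fun z : F × F => w 0 * z.1 ^ 2 + w 1 * z.2 ^ 2)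
      (fun x => by simp [Fin.sum_univ_two]) d]
    simpa using abs_fiberCard_binary_sub_le h2 (hw 0) (hw 1) hd
  | more k ih _ =>
    rw [fiberCard_diagonal_add_two, fiberCard_add_of_const (fun c hc =>
        congrArg Nat.cast (fiberCard_binary_eq h2 (hw 0) (hw 1) hc hd))
      (fun x : Fin (k + 1) → F => ∑ i, w i.succ.succ * x i ^ 2)]
    have hs := abs_fiberCard_binary_sub_le h2 (hw 0) (hw 1) hd
    have hS := ih (fun i => w i.succ.succ) fun i => hw _
    set s := (fiberCard (fun z : F × F => w 0 * z.1 ^ 2 + w 1 * z.2 ^ 2) d : ℤ)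
    set S := (fiberCard (fun x : Fin (k + 1) → F => ∑ i, w i.succ.succ * x i ^ 2) d : ℤ)
    simp only [Nat.card_prod, Nat.card_fun, Nat.card_fin, Nat.cast_mul, Nat.cast_pow]
    set q := (Nat.card F : ℤ)
    calc |q ^ (k + 1) * s + (q * q - q * s) * S - q ^ (k + 2)|
        = |(q - s) * (S - q ^ k) * q| := by ring_nf
      _ = |s - q| * |S - q ^ k| * q := by
          rw [abs_mul, abs_mul, abs_sub_comm q s, Nat.abs_cast]
      _ ≤ 1 * q ^ (k / 2) * q := by gcongr
      _ = q ^ ((k + 2) / 2) := by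
          rw [one_mul, Nat.add_div_right _ two_pos, pow_succ]

end Binary

section BilinForm

open Module LinearMap.BilinForm

variable {F V : Type*} [Field F] [AddCommGroup V] [Module F V] {B : LinearMap.BilinForm F V}

theorem exists_equiv_sum_mul_sq_eq [FiniteDimensional F V] (h2 : (2 : F) ≠ 0) (hs : B.IsSymm)
    (hB : B.Nondegenerate) {k : ℕ} (hk : finrank F V = k) :
    ∃ (w : Fin k → F) (e : V ≃ (Fin k → F)), (∀ i, w i ≠ 0) ∧
      ∀ x, ∑ i, w i * e x i ^ 2 = B x x := by
  subst hk
  have := invertibleOfNonzero h2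
  have hQ : QuadraticMap.associated B.toQuadraticMap = B :=
    QuadraticMap.associated_left_inverse F hs.eq
  obtain ⟨w, ⟨e⟩⟩ := QuadraticForm.equivalent_weightedSumSquares_units_of_nondegenerate'
    B.toQuadraticMap (by rw [hQ]; exact hB.1)
  refine ⟨fun i => w i, e.toEquiv, fun i => (w i).ne_zero, fun x => ?_⟩
  have he := e.map_app x
  simp only [QuadraticMap.weightedSumSquares_apply, Units.smul_def, smul_eq_mul, ← sq] at he
  exact he

theorem finrank_orthogonal_span_singleton_add_one [FiniteDimensional F V] {x : V}
    (hx : B x x ≠ 0) : finrank F (B.orthogonal (F ∙ x)) + 1 = finrank F V := by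
  have hx0 : x ≠ 0 := fun h => hx (by simp [h])
  rw [← Submodule.finrank_add_eq_of_isCompl (isCompl_span_singleton_orthogonal hx),
    finrank_span_singleton hx0, add_comm]

theorem fiberCard_eq_fiberCard_orthogonal_prod (hs : B.IsSymm) {x : V} (hx : B x x ≠ 0) (c : F) :
    fiberCard (fun v => B v v) c =
      fiberCard (fun z : B.orthogonal (F ∙ x) × F => B z.1 z.1 + B x x * z.2 ^ 2) c := by
  have hx0 : x ≠ 0 := fun h => hx (by simp [h])
  let e : B.orthogonal (F ∙ x) × F ≃ V := ((Equiv.prodComm _ _).trans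
    ((LinearEquiv.toSpanNonzeroSingleton F V x hx0).toEquiv.prodCongr (Equiv.refl _))).trans
      (Submodule.prodEquivOfIsCompl _ _ (isCompl_span_singleton_orthogonal hx)).toEquiv
  refine (fiberCard_congr e (fun z => ?_) c).symm
  have hxz : B x z.1 = 0 := z.1.2 x (Submodule.mem_span_singleton_self x)
  have hzx : B z.1 x = 0 := (hs.eq _ _).trans hxz
  have hz : e z = z.2 • x + z.1 := by simp [e]
  simp only [hz, map_add, map_smul, LinearMap.add_apply, LinearMap.smul_apply, smul_eq_mul, hxz,
    hzx]
  ring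

variable [Finite F] [FiniteDimensional F V]

theorem fiberCard_le_mul_one_add_inv (h2 : (2 : F) ≠ 0) (hs : B.IsSymm) (hB : B.Nondegenerate)
    {k : ℕ} (hk : 3 ≤ k) (hV : finrank F V = k + 1) {d : F} (hd : d ≠ 0) :
    (fiberCard (fun x => B x x) d : ℝ) ≤ (Nat.card F : ℝ) ^ k * (1 + ((Nat.card F : ℝ) ^ 2)⁻¹) := by
  obtain ⟨w, e, hw, he⟩ := exists_equiv_sum_mul_sq_eq h2 hs hB hV
  have h := (abs_le.1 (abs_fiberCard_diagonal_sub_le h2 k w hw hd)).2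
  rw [← fiberCard_congr e he] at h
  have hq : (1 : ℝ) ≤ Nat.card F := by exact_mod_cast Nat.card_pos
  calc (fiberCard (fun x => B x x) d : ℝ) ≤ (Nat.card F : ℝ) ^ k + (Nat.card F : ℝ) ^ (k / 2) := by
        exact_mod_cast sub_le_iff_le_add'.1 h
    _ ≤ (Nat.card F : ℝ) ^ k + (Nat.card F : ℝ) ^ (k - 2) := by
        have : k / 2 ≤ k - 2 := by omega
        gcongr
    _ = (Nat.card F : ℝ) ^ k * (1 + ((Nat.card F : ℝ) ^ 2)⁻¹) := by
        rw [pow_sub₀ _ (by positivity) (by omega)]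
        ring

theorem fiberCard_eq_of_finrank_eq_two (h2 : (2 : F) ≠ 0) (hs : B.IsSymm) (hB : B.Nondegenerate)
    (hV : finrank F V = 2) {c d : F} (hc : c ≠ 0) (hd : d ≠ 0) :
    fiberCard (fun x => B x x) c = fiberCard (fun x => B x x) d := by
  obtain ⟨w, e, hw, he⟩ := exists_equiv_sum_mul_sq_eq h2 hs hB hV
  have h (a : F) := fiberCard_congr (e.trans (finTwoArrowEquiv F))
    (g := fun z : F × F => w 0 * z.1 ^ 2 + w 1 * z.2 ^ 2)
    (fun x => (Fin.sum_univ_two _).symm.trans (he x)) a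
  rw [h, fiberCard_binary_eq h2 (hw 0) (hw 1) hc hd, h]

/-- If `B v v` takes each nonzero value `s` times on the plane `x^⊥`, then it takes the value
`B x x` exactly `q (2 q - s)` times, and `s (2 q - s) ≤ q ^ 2`. -/
theorem fiberCard_mul_fiberCard_orthogonal_le (h2 : (2 : F) ≠ 0) (hs : B.IsSymm)
    (hB : B.Nondegenerate) (hV : finrank F V = 3) {x : V} (hx : B x x ≠ 0) {c : F} (hc : c ≠ 0) :
    fiberCard (fun v => B v v) (B x x) *
      fiberCard (fun v : B.orthogonal (F ∙ x) => B v v) c ≤ Nat.card F ^ 3 := by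
  have hW : finrank F (B.orthogonal (F ∙ x)) = 2 := by
    have := finrank_orthogonal_span_singleton_add_one hx
    omega
  have : Finite (B.orthogonal (F ∙ x)) := Module.finite_of_finite F
  have hconst (d : F) (hd : d ≠ 0) : fiberCard (fun v : B.orthogonal (F ∙ x) => B v v) d =
      fiberCard (fun v : B.orthogonal (F ∙ x) => B v v) c :=
    fiberCard_eq_of_finrank_eq_two h2 (hs.restrict _)
      (restrict_nondegenerate_orthogonal_spanSingleton B hB hs.isRefl hx) hW hd hc
  have h := fiberCard_add_of_const (fun d hd => congrArg Nat.cast (hconst d hd))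
    (fun t : F => B x x * t ^ 2) (B x x)
  rw [← fiberCard_eq_fiberCard_orthogonal_prod hs hx, fiberCard_mul_sq_self h2 hx,
    Module.natCard_eq_pow_finrank (K := F) (V := B.orthogonal (F ∙ x)), hW] at h
  zify
  rw [h]
  push_cast
  nlinarith [mul_nonneg (Nat.cast_nonneg (α := ℤ) (Nat.card F))
    (sq_nonneg ((Nat.card F : ℤ) - fiberCard (fun v : B.orthogonal (F ∙ x) => B v v) c))]

end BilinForm

section Frame

open Module LinearMap.BilinForm

variable {F V : Type*} [Field F] [AddCommGroup V] [Module F V]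

/-- The number of orthogonal families `l` for `B` with prescribed values `B (l i) (l i) = d i`. -/
noncomputable def frameCard (B : LinearMap.BilinForm F V) {n : ℕ} (d : Fin n → F) : ℕ :=
  Nat.card {l : Fin n → V // ∀ i j, B (l i) (l j) = Matrix.diagonal d i j}

theorem frameCard_one (B : LinearMap.BilinForm F V) (d : Fin 1 → F) :
    frameCard B d = fiberCard (fun x => B x x) (d 0) :=
  Nat.card_congr ((Equiv.funUnique (Fin 1) V).subtypeEquiv fun l => by simp)

theorem frameCard_succ_le [Finite V] (B : LinearMap.BilinForm F V) {n : ℕ} (d : Fin (n + 1) → F)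
    {K : ℝ} (hK : ∀ x, B x x = d 0 →
      (frameCard (B.restrict (B.orthogonal (F ∙ x))) (Fin.tail d) : ℝ) ≤ K) :
    (frameCard B d : ℝ) ≤ fiberCard (fun x => B x x) (d 0) * K := by
  have := Fintype.ofFinite {x // B x x = d 0}
  let Φ (l : {l : Fin (n + 1) → V // ∀ i j, B (l i) (l j) = Matrix.diagonal d i j}) :
      (x : {x // B x x = d 0}) × {l : Fin n → B.orthogonal (F ∙ x.1) //
        ∀ i j, B.restrict _ (l i) (l j) = Matrix.diagonal (Fin.tail d) i j} :=
    ⟨⟨l.1 0, by simp [l.2]⟩, ⟨fun i => ⟨l.1 i.succ, by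
        simp [mem_orthogonal_iff, Submodule.mem_span_singleton, l.2,
          Matrix.diagonal_apply_ne _ (Fin.succ_ne_zero i).symm]⟩,
      fun i j => by simp [restrict_apply, l.2, Matrix.diagonal_apply, Fin.tail]⟩⟩
  have hΦ (l) : (Fin.cons (Φ l).1.1 fun i => ((Φ l).2.1 i : V)) = l.1 := Fin.cons_self_tail l.1
  have hcard := Nat.card_le_card_of_injective Φ fun l l' h => Subtype.ext <| by
    rw [← hΦ l, h, hΦ l']
  rw [Nat.card_sigma] at hcard
  calc (frameCard B d : ℝ) ≤ ∑ x : {x // B x x = d 0},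
        (frameCard (B.restrict (B.orthogonal (F ∙ x.1))) (Fin.tail d) : ℝ) := by
        exact_mod_cast hcard
    _ ≤ ∑ _x : {x // B x x = d 0}, K := Finset.sum_le_sum fun x _ => hK x.1 x.2
    _ = fiberCard (fun x => B x x) (d 0) * K := by
        rw [Finset.sum_const, Finset.card_univ, nsmul_eq_mul, fiberCard, Nat.card_eq_fintype_card]

variable [Finite F] [FiniteDimensional F V]

theorem frameCard_two_le (h2 : (2 : F) ≠ 0) {B : LinearMap.BilinForm F V} (hs : B.IsSymm)
    (hB : B.Nondegenerate) (hV : finrank F V = 3) {d : Fin 2 → F} (hd : ∀ i, d i ≠ 0) :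
    (frameCard B d : ℝ) ≤ (Nat.card F : ℝ) ^ 3 := by
  have : Finite V := Module.finite_of_finite F
  have h := frameCard_succ_le B d
    (K := (Nat.card F ^ 3 / fiberCard (fun v => B v v) (d 0) : ℕ)) fun x hx => by
      have : Nonempty {v // B v v = d 0} := ⟨x, hx⟩
      have hpos : 0 < fiberCard (fun v => B v v) (d 0) := Nat.card_pos
      have hle := fiberCard_mul_fiberCard_orthogonal_le h2 hs hB hV (hx ▸ hd 0) (hd 1)
      rw [frameCard_one, Nat.cast_le, Nat.le_div_iff_mul_le hpos, mul_comm]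
      rwa [hx] at hle
  norm_cast at h ⊢
  exact h.trans (Nat.mul_div_le _ _)

theorem frameCard_le (h2 : (2 : F) ≠ 0) (n : ℕ) {B : LinearMap.BilinForm F V} (hs : B.IsSymm)
    (hB : B.Nondegenerate) (hV : finrank F V = n + 3) {d : Fin (n + 2) → F} (hd : ∀ i, d i ≠ 0) :
    (frameCard B d : ℝ) ≤
      (Nat.card F : ℝ) ^ (n + 3).choose 2 * (1 + ((Nat.card F : ℝ) ^ 2)⁻¹) ^ n := by
  induction n generalizing V with
  | zero => simpa using frameCard_two_le h2 hs hB hV hd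
  | succ n ih =>
    have : Finite V := Module.finite_of_finite F
    calc (frameCard B d : ℝ) ≤ fiberCard (fun x => B x x) (d 0) *
          ((Nat.card F : ℝ) ^ (n + 3).choose 2 * (1 + ((Nat.card F : ℝ) ^ 2)⁻¹) ^ n) := by
          refine frameCard_succ_le B d fun x hx => ?_
          have hx : B x x ≠ 0 := hx ▸ hd 0
          have := finrank_orthogonal_span_singleton_add_one hx
          exact ih (hs.restrict _)
            (restrict_nondegenerate_orthogonal_spanSingleton B hB hs.isRefl hx) (by omega)
            fun i => hd _
      _ ≤ ((Nat.card F : ℝ) ^ (n + 3) * (1 + ((Nat.card F : ℝ) ^ 2)⁻¹)) *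
          ((Nat.card F : ℝ) ^ (n + 3).choose 2 * (1 + ((Nat.card F : ℝ) ^ 2)⁻¹) ^ n) := by
          gcongr
          exact fiberCard_le_mul_one_add_inv h2 hs hB (by omega) hV (hd 0)
      _ = (Nat.card F : ℝ) ^ (n + 1 + 3).choose 2 * (1 + ((Nat.card F : ℝ) ^ 2)⁻¹) ^ (n + 1) := by
          rw [show n + 1 + 3 = (n + 3) + 1 by ring, Nat.choose_succ_succ' (n + 3) 1,
              Nat.choose_one_right]
          ring

end Frame

section Field

open Matrix

variable {m F : Type*} [Fintype m] [Field F]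

theorem repCard_diagonal [DecidableEq m] (Q : Matrix m m F) {n : ℕ} (d : Fin n → F) :
    repCard Q (diagonal d) = frameCard Q.toBilin' d :=
  Nat.card_congr <| (Matrix.of.symm.trans (Equiv.piComm _)).subtypeEquiv fun L => by
    have h (i j) : (Lᵀ * Q * L) i j = Q.toBilin' (fun k => L k i) fun k => L k j := by
      rw [toBilin'_apply', Matrix.mul_assoc]
      rfl
    simp only [← Matrix.ext_iff, h]
    rfl

theorem exists_isUnit_transpose_mul_mul_eq_diagonal (h2 : (2 : F) ≠ 0) {n : ℕ}
    {Λ : Matrix (Fin n) (Fin n) F} (hΛ : Λ.IsSymm) :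
    ∃ U d, IsUnit U ∧ Uᵀ * Λ * U = diagonal d := by
  have := invertibleOfNonzero h2
  obtain ⟨v₀, hv₀⟩ := LinearMap.BilinForm.exists_orthogonal_basis (B := Λ.toBilin')
    (LinearMap.BilinForm.isSymm_iff.1 (isSymm_toBilin'_iff_isSymm.2 hΛ))
  let e := finCongr (Module.finrank_fin_fun F (n := n))
  let v := v₀.reindex e
  let b := Pi.basisFun F (Fin n)
  have := b.invertibleToMatrix v
  refine ⟨b.toMatrix v, fun i => Λ.toBilin' (v i) (v i), isUnit_of_invertible _, ?_⟩
  have hΛb : LinearMap.BilinForm.toMatrix b Λ.toBilin' = Λ :=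
    LinearMap.BilinForm.toMatrix'_toBilin' Λ
  rw [← hΛb, LinearMap.BilinForm.toMatrix_mul_basis_toMatrix, hΛb]
  ext i j
  obtain rfl | hij := eq_or_ne i j
  · simp
  · have hv : Λ.toBilin' (v i) (v j) = 0 := by
      simpa only [v, Module.Basis.reindex_apply] using hv₀ (e.symm.injective.ne hij)
    rw [LinearMap.BilinForm.toMatrix_apply, hv, diagonal_apply_ne _ hij]

theorem one_add_pow_le_one_add_mul {x : ℝ} (hx : 0 ≤ x) (hx1 : x ≤ 1) (n : ℕ) :
    (1 + x) ^ n ≤ 1 + 2 ^ n * x := by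
  calc (1 + x) ^ n = ((1 - x) • (1 : ℝ) + x • (2 : ℝ)) ^ n := by
        simp only [smul_eq_mul]
        ring
    _ ≤ (1 - x) • (1 : ℝ) ^ n + x • (2 : ℝ) ^ n :=
        (convexOn_pow n).2 (Set.mem_Ici.2 zero_le_one) (Set.mem_Ici.2 zero_le_two)
          (sub_nonneg.2 hx1) hx (sub_add_cancel _ _)
    _ ≤ 1 + 2 ^ n * x := by
        rw [one_pow, smul_eq_mul, smul_eq_mul]
        linarith

theorem repCard_le_mul_one_add_div (h2 : (2 : F) ≠ 0) [Finite F] {n : ℕ}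
    {Q : Matrix (Fin (n + 3)) (Fin (n + 3)) F} (hQ : Q.IsSymm) (hQdet : Q.det ≠ 0)
    {Λ : Matrix (Fin (n + 2)) (Fin (n + 2)) F} (hΛ : Λ.det ≠ 0) : (repCard Q Λ : ℝ) ≤
      (Nat.card F : ℝ) ^ (n + 3).choose 2 * (1 + 2 ^ n / (Nat.card F : ℝ) ^ 2) := by
  obtain h | h := eq_or_ne (repCard Q Λ) 0
  · rw [h, Nat.cast_zero]
    positivity
  obtain ⟨U, d, hU, hd⟩ :=
    exists_isUnit_transpose_mul_mul_eq_diagonal h2 (isSymm_of_repCard_ne_zero hQ h)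
  have hdet : (diagonal d).det ≠ 0 := by
    rw [← hd, det_mul, det_mul, det_transpose]
    have := ((isUnit_iff_isUnit_det U).1 hU).ne_zero
    positivity
  rw [det_diagonal, Finset.prod_ne_zero_iff] at hdet
  have hle : repCard Q Λ ≤ frameCard Q.toBilin' d := by
    rw [← repCard_diagonal, ← hd]
    exact repCard_le_repCard_of_isUnit Q Λ hU
  calc (repCard Q Λ : ℝ) ≤ frameCard Q.toBilin' d := Nat.cast_le.2 hle
    _ ≤ (Nat.card F : ℝ) ^ (n + 3).choose 2 * (1 + ((Nat.card F : ℝ) ^ 2)⁻¹) ^ n :=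
        frameCard_le h2 n (isSymm_toBilin'_iff_isSymm.2 hQ)
          (LinearMap.BilinForm.nondegenerate_toBilin'_of_det_ne_zero' Q hQdet) (by simp)
          fun i => hdet i (Finset.mem_univ i)
    _ ≤ _ := by
        have hq : (1 : ℝ) ≤ Nat.card F := by exact_mod_cast Nat.card_pos
        gcongr
        exact one_add_pow_le_one_add_mul (by positivity) (inv_le_one_of_one_le₀ (one_le_pow₀ hq)) n

end Field

section LocalDensity

theorem map_intCast_map {m n R S : Type*} [Ring R] [Ring S] (f : R →+* S) (A : Matrix m n ℤ) :
    (A.map Int.cast).map f = A.map Int.cast := by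
  ext i j
  exact map_intCast f (A i j)

variable {m n : Type*} [Fintype m] [Fintype n]

/-- The local density `ν_p(Q, Λ)` of representations of `Λ` by `Q`. The truncated subtraction in
the exponent is a genuine one when `card n ≤ card m`. -/
noncomputable def localDensity (p : ℕ) (Q : Matrix m m ℤ) (Λ : Matrix n n ℤ) : ℝ≥0∞ :=
  Filter.limsup (fun r : ℕ =>
    (repCard (Q.map (Int.cast : ℤ → ZMod (p ^ r))) (Λ.map Int.cast) : ℝ≥0∞) /
      (p : ℝ≥0∞) ^ (r * (Fintype.card m * Fintype.card n - (Fintype.card n + 1).choose 2)))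
    Filter.atTop

theorem nuId_eq_localDensity (p : ℕ) {n : ℕ} (Λ : Matrix (Fin n) (Fin n) ℤ) :
    nuId p n Λ = localDensity p (1 : Matrix (Fin (n + 1)) (Fin (n + 1)) ℤ) Λ := by
  simp [nuId, localDensity, repCard, Matrix.map_one, Nat.choose_two_right, mul_comm (n + 1) n]

variable {p e r : ℕ}

theorem exists_isNilpotent_four_mul_eq_natCast_pow (hp : p.Prime) (he : 0 < e)
    (h2 : p = 2 → 3 ≤ e) (r : ℕ) :
    ∃ c : ZMod (p ^ r), IsNilpotent c ∧ 4 * c = (p ^ e : ℕ) := by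
  have hnil {k : ℕ} (hk : 0 < k) : IsNilpotent ((p : ZMod (p ^ r)) ^ k) :=
    IsNilpotent.pow_of_pos ⟨r, by exact_mod_cast ZMod.natCast_self (p ^ r)⟩ hk.ne'
  obtain rfl | hp2 := eq_or_ne p 2
  · have he : 3 ≤ e := h2 rfl
    refine ⟨(2 : ℕ) ^ (e - 2), hnil (by omega), ?_⟩
    have : 2 ^ e = 4 * 2 ^ (e - 2) := by
      rw [show 4 = 2 ^ 2 by rfl, ← pow_add, Nat.add_sub_cancel' (by omega)]
    exact_mod_cast congrArg Nat.cast this.symm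
  · have h4 : IsUnit (4 : ZMod (p ^ r)) :=
      (ZMod.isUnit_iff_coprime 4 _).2 <| Nat.Coprime.pow_right _ <|
        Nat.Coprime.pow_left 2 <| (Nat.coprime_primes Nat.prime_two hp).2 hp2.symm
    refine ⟨h4.unit⁻¹ * (p : ZMod (p ^ r)) ^ e,
      (Commute.all _ _).isNilpotent_mul_left (hnil he), ?_⟩
    rw [← mul_assoc, h4.mul_val_inv, one_mul, Nat.cast_pow]

theorem isUnit_det_map_intCast [DecidableEq n] (hp : p.Prime) {Λ : Matrix n n ℤ}
    (hΛ : ¬ (p : ℤ) ∣ Λ.det) (r : ℕ) :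
    IsUnit (Λ.map (Int.cast : ℤ → ZMod (p ^ r))).det := by
  have hdet : (Λ.map (Int.cast : ℤ → ZMod (p ^ r))).det = Λ.det :=
    ((Int.castRingHom (ZMod (p ^ r))).map_det Λ).symm
  rw [hdet, ZMod.coe_int_isUnit_iff_isCoprime, Nat.cast_pow]
  exact ((Nat.prime_iff_prime_int.1 hp).coprime_iff_not_dvd.2 hΛ).pow_left

theorem repCard_zmod_mul_pow_le [DecidableEq n] (hp : p.Prime) (he : 0 < e) (h2 : p = 2 → 3 ≤ e)
    (her : e ≤ r) {Q : Matrix m m ℤ} (hQ : Q.IsSymm) {Λ : Matrix n n ℤ}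
    (hΛ : ¬ (p : ℤ) ∣ Λ.det) :
    repCard (Q.map (Int.cast : ℤ → ZMod (p ^ r))) (Λ.map Int.cast) *
        (p ^ (r - e)) ^ (Fintype.card n + 1).choose 2 ≤
      repCard (Q.map (Int.cast : ℤ → ZMod (p ^ e))) (Λ.map Int.cast) *
        (p ^ (r - e)) ^ (Fintype.card m * Fintype.card n) := by
  have (k : ℕ) : NeZero (p ^ k) := ⟨pow_ne_zero k hp.ne_zero⟩
  have hdvd : p ^ e ∣ p ^ r := pow_dvd_pow p her
  set f := ZMod.castHom hdvd (ZMod (p ^ e))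
  have hf : Nat.card (RingHom.ker f) = p ^ (r - e) := by
    refine Nat.eq_of_mul_eq_mul_right (pow_pos hp.pos e) ?_
    rw [card_ker_castHom_mul, Nat.pow_sub_mul_pow p her]
  obtain ⟨c, hc, hce⟩ := exists_isNilpotent_four_mul_eq_natCast_pow hp he h2 r
  rw [← hf, ← map_intCast_map f Q, ← map_intCast_map f Λ]
  exact (repCard_mul_card_ker_pow_le_card_map_eq f hc (hce ▸ ker_castHom_le_span hdvd)
    (hQ.map _) (isUnit_det_map_intCast hp hΛ r)).trans (card_map_eq_le f _ _)

theorem localDensity_le_repCard_div [DecidableEq n] (hp : p.Prime) (he : 0 < e)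
    (h2 : p = 2 → 3 ≤ e) {Q : Matrix m m ℤ} (hQ : Q.IsSymm) {Λ : Matrix n n ℤ}
    (hΛ : ¬ (p : ℤ) ∣ Λ.det) :
    localDensity p Q Λ ≤ repCard (Q.map (Int.cast : ℤ → ZMod (p ^ e))) (Λ.map Int.cast) /
      (p : ℝ≥0∞) ^ (e * (Fintype.card m * Fintype.card n - (Fintype.card n + 1).choose 2)) := by
  refine Filter.limsup_le_of_le (by isBoundedDefault) ?_
  filter_upwards [Filter.eventually_ge_atTop e] with r her
  set C := (Fintype.card n + 1).choose 2
  set D := Fintype.card m * Fintype.card n - C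
  have hle := repCard_zmod_mul_pow_le hp he h2 her hQ hΛ
  have hpos : 0 < p ^ (r - e) := pow_pos hp.pos _
  have hcancel : repCard (Q.map (Int.cast : ℤ → ZMod (p ^ r))) (Λ.map Int.cast) ≤
      repCard (Q.map (Int.cast : ℤ → ZMod (p ^ e))) (Λ.map Int.cast) * (p ^ (r - e)) ^ D := by
    refine Nat.le_of_mul_le_mul_right (hle.trans ?_) (pow_pos hpos C)
    rw [mul_assoc, ← pow_add]
    exact Nat.mul_le_mul_left _ (Nat.pow_le_pow_right hpos le_tsub_add)
  have hp0 : (p : ℝ≥0∞) ^ (e * D) ≠ 0 := pow_ne_zero _ (by exact_mod_cast hp.ne_zero)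
  have hexp : r * D = e * D + (r - e) * D := by rw [← add_mul, Nat.add_sub_cancel' her]
  refine ENNReal.div_le_of_le_mul ?_
  rw [hexp, pow_add, ← mul_assoc, ENNReal.div_mul_cancel hp0 (by finiteness), pow_mul]
  exact_mod_cast hcancel

theorem localDensity_two_le [DecidableEq n] {Q : Matrix m m ℤ} (hQ : Q.IsSymm) {Λ : Matrix n n ℤ}
    (hΛ : ¬ 2 ∣ Λ.det) :
    localDensity 2 Q Λ ≤ 8 ^ (Fintype.card m * Fintype.card n) := by
  calc localDensity 2 Q Λ ≤ repCard (Q.map (Int.cast : ℤ → ZMod (2 ^ 3))) (Λ.map Int.cast) :=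
        (localDensity_le_repCard_div Nat.prime_two three_pos (fun _ => le_rfl) hQ hΛ).trans <|
          ENNReal.div_le_of_le_mul <| le_mul_of_one_le_right' <| one_le_pow₀ (by norm_num)
    _ ≤ 8 ^ (Fintype.card m * Fintype.card n) := by
        have h := repCard_le_card_pow (Q.map (Int.cast : ℤ → ZMod (2 ^ 3))) (Λ.map Int.cast)
        rw [Nat.card_zmod] at h
        exact_mod_cast h

theorem one_add_ofReal_div_pow {C : ℝ} (hC : 0 ≤ C) (hp : 0 < p) (k : ℕ) :
    1 + ENNReal.ofReal C / (p : ℝ≥0∞) ^ k = ENNReal.ofReal (1 + C / p ^ k) := by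
  rw [ENNReal.ofReal_add zero_le_one (by positivity), ENNReal.ofReal_one,
    ENNReal.ofReal_div_of_pos (by positivity), ENNReal.ofReal_pow (by positivity),
    ENNReal.ofReal_natCast]

theorem localDensity_le_of_ne_two (hp : p.Prime) (hp2 : p ≠ 2) {n : ℕ}
    {Q : Matrix (Fin (n + 3)) (Fin (n + 3)) ℤ} (hQ : Q.IsSymm) (hQdet : ¬ (p : ℤ) ∣ Q.det)
    {Λ : Matrix (Fin (n + 2)) (Fin (n + 2)) ℤ} (hΛ : ¬ (p : ℤ) ∣ Λ.det) :
    localDensity p Q Λ ≤ ENNReal.ofReal (1 + 2 ^ n / p ^ 2) := by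
  have : Fact (p ^ 1).Prime := ⟨by rwa [pow_one]⟩
  have h2 : (2 : ZMod (p ^ 1)) ≠ 0 :=
    Ring.two_ne_zero <| by rwa [ZMod.ringChar_zmod_n, pow_one]
  have hcard : (Nat.card (ZMod (p ^ 1)) : ℝ) = p := by rw [Nat.card_zmod, pow_one]
  have hexp : (n + 3) * (n + 2) - (n + 3).choose 2 = (n + 3).choose 2 := by
    have : (n + 3) * (n + 2) = (n + 3).choose 2 * 2 := by
      simpa using Nat.add_one_mul_choose_eq (n + 2) 1
    omega
  have hrep := repCard_le_mul_one_add_div h2 (hQ.map Int.cast)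
    (isUnit_det_map_intCast hp hQdet 1).ne_zero (isUnit_det_map_intCast hp hΛ 1).ne_zero
  have hdens := localDensity_le_repCard_div hp one_pos (fun h => absurd h hp2) hQ hΛ
  rw [hcard] at hrep
  rw [Fintype.card_fin, Fintype.card_fin, one_mul, hexp] at hdens
  refine hdens.trans (ENNReal.div_le_of_le_mul ?_)
  rw [← ENNReal.ofReal_natCast, ← ENNReal.ofReal_natCast p, ← ENNReal.ofReal_pow (by positivity),
    ← ENNReal.ofReal_mul (by positivity), mul_comm]
  exact ENNReal.ofReal_le_ofReal hrep

end LocalDensity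

theorem nu_bound_nondivisor_general (n : ℕ) (hn : 2 ≤ n) :
    ∃ C : ℝ, 0 < C ∧ ∀ (p : ℕ) (Q : Matrix (Fin (n + 1)) (Fin (n + 1)) ℤ)
      (Λ : Matrix (Fin n) (Fin n) ℤ), p.Prime → Q.IsSymm → ¬ (p : ℤ) ∣ Q.det →
      ¬ (p : ℤ) ∣ Λ.det → localDensity p Q Λ ≤ 1 + ENNReal.ofReal C / (p : ℝ≥0∞) ^ 2 := by
  obtain ⟨n, rfl⟩ := Nat.exists_eq_add_of_le' hn
  -- Dividing by `2 ^ 2` must leave the bound valid at `p = 2`, whence the factor `4`.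
  refine ⟨4 * 8 ^ ((n + 3) * (n + 2)), by positivity, fun p Q Λ hp hQ hQdet hΛ => ?_⟩
  rw [one_add_ofReal_div_pow (by positivity) hp.pos]
  obtain rfl | hp2 := eq_or_ne p 2
  · calc localDensity 2 Q Λ ≤ 8 ^ ((n + 3) * (n + 2)) := by
          simpa only [Fintype.card_fin] using localDensity_two_le hQ hΛ
      _ = ENNReal.ofReal (8 ^ ((n + 3) * (n + 2))) := by
          rw [ENNReal.ofReal_pow (by norm_num), ENNReal.ofReal_ofNat]
      _ ≤ _ := by
          gcongr
          norm_num
  · refine (localDensity_le_of_ne_two hp hp2 hQ hQdet hΛ).trans ?_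
    gcongr
    calc (2 : ℝ) ^ n ≤ 8 ^ n := by gcongr; norm_num
      _ ≤ 8 ^ ((n + 3) * (n + 2)) := pow_le_pow_right₀ (by norm_num) (by nlinarith)
      _ ≤ 4 * 8 ^ ((n + 3) * (n + 2)) := le_mul_of_one_le_left (by positivity) (by norm_num)

/-- For fixed `n ≥ 2` there is `C > 0`, independent of `p` and `Λ`, such that for
every prime `p` and every positive definite `Λ ∈ M_{n,n}(ℤ)` with `p ∤ det Λ`,
`ν_p(I_{n+1}, Λ) ≤ 1 + C/p²`. -/
theorem nu_bound_nondivisor (n : ℕ) (hn : 2 ≤ n) :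
    ∃ C : ℝ, 0 < C ∧ ∀ (p : ℕ) (Λ : Matrix (Fin n) (Fin n) ℤ),
      p.Prime → Λ.PosDef → ¬ (p : ℤ) ∣ Λ.det →
      nuId p n Λ ≤ 1 + ENNReal.ofReal C / (p : ℝ≥0∞) ^ 2 := by
  obtain ⟨C, hC, h⟩ := nu_bound_nondivisor_general n hn
  exact ⟨C, hC, fun p Λ hp _ hΛ => nuId_eq_localDensity p Λ ▸ h p 1 Λ hp Matrix.isSymm_one
    (by rw [Matrix.det_one]; exact (Nat.prime_iff_prime_int.1 hp).not_dvd_one) hΛ⟩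
end

section
/- Fix an integer n ≥ 2. There exists a constant C > 0, independent of p and Λ, such that for every prime p and every positive definite matrix Λ ∈ M_{n,n}(ℤ) with p | det(Λ), one has ν_p(I_{n+1}, Λ) ≤ C · Σ p^{β₂(l₁,…,l_n) + β₃(l₁,…,l_n) + … + β_n(l₁,…,l_n)}, where the sum runs over all n-tuples of nonnegative integers (l₁,…,l_n) with l₁ + l₂ + … + l_n ≤ o_p(det(Λ)). -/
open scoped ENNReal

/-- `o_p(k)`, the exponent of the prime `p` in the integer `k`, valued in `ℕ∞ ⊆ ℤ ∪ {∞}`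
(here realized inside `WithTop ℤ`), with the convention `o_p(0) = ∞`. -/
def opVal (p : ℕ) (k : ℤ) : WithTop ℤ :=
  if k = 0 then ⊤ else ((k.natAbs.factorization p : ℤ) : WithTop ℤ)

/-- `μ_{{1,…,j},A}` for `j = A.card`: the determinant of the submatrix of `Λ` with
rows the first `A.card` rows (i.e. rows `1,…,j` in 1-based indexing) and columns
indexed by `A` (in increasing order). -/
def muMinor {n : ℕ} (Λ : Matrix (Fin n) (Fin n) ℤ) (A : Finset (Fin n)) : ℤ :=
  Matrix.det (Matrix.of fun i k : Fin A.card =>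
    Λ (Fin.castLE ((A.card_le_univ).trans_eq (Fintype.card_fin n)) i)
      ((A.orderIsoOfFin rfl k : Fin n)))

/-- `p^b` for `b ∈ ℤ ∪ {∞}`, interpreted in the extended nonnegative reals. -/
noncomputable def epow (p : ℕ) (b : WithTop ℤ) : ℝ≥0∞ :=
  b.recTopCoe ⊤ (fun z => (p : ℝ≥0∞) ^ z)

/-- `β_i(l₁,…,l_n)`: the minimum of `(i-1)·l_i` and, over `1 ≤ j ≤ i-1`, of
`(i-1-j)·l_i + min_{|A|=j} o_p(μ_{{1,…,j},A}) - (l₁ + ⋯ + l_j)`.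
Here `l : Fin n → ℕ` records `(l₁,…,l_n)` (so `l_k` is `l ⟨k-1,_⟩`), and the value
is taken in `ℤ ∪ {∞}`. -/
noncomputable def betaExp (p n : ℕ) (Λ : Matrix (Fin n) (Fin n) ℤ) (l : Fin n → ℕ)
    (i : ℕ) : WithTop ℤ :=
  let bl : ℕ → ℤ := fun k => if h : k < n then (l ⟨k, h⟩ : ℤ) else 0
  min ((((i : ℤ) - 1) * bl (i - 1) : ℤ) : WithTop ℤ)
    ((Finset.Icc 1 (i - 1)).inf fun j =>
      ((((i : ℤ) - 1 - (j : ℤ)) * bl (i - 1) - ∑ k ∈ Finset.range j, bl k : ℤ) : WithTop ℤ)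
        + (Finset.powersetCard j (Finset.univ : Finset (Fin n))).inf
            fun A => opVal p (muMinor Λ A))

/-!
Let `v` be the valuation of `det Λ` at `p` and let `r > v`. Every solution of `Lᵀ L ≡ Λ (mod p^r)`
is `L = U H` with `U` primitive modulo `p` and `H` in Hermite form with diagonal `p^{l_i}`: among
all factorizations of an integral lift with triangular `H`, take one with `∑ l_i` maximal. Then
`Hᵀ` divides `Λ` from the left, say `Λ = Hᵀ Y`, and `∑ l_i ≤ v`.

For given `l` the possible `H` are counted column by column. The first `i - 1` columns of `H`
determine the first `i - 1` rows of `Y`, and the `i`-th column modulo `p^{l_i}` then solves a linear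
system whose coefficients are these rows. A `j × j` minor of the first `j` rows of `Y` is the
corresponding minor of `Λ` divided by `p^{l_1 + ⋯ + l_j}`, so there are at most `p^{β_i}` solutions.

For given `H` the map `U ↦ U H` is `p^{(n+1) ∑ l_i}`-to-one modulo `p^r`, and `Z = Uᵀ U` solves
`Hᵀ Z H ≡ Λ`, which has at most `p^{(n+1) ∑ l_i}` symmetric solutions, so these factors cancel.
Finally `Uᵀ U = Z` has `O(p^{r n(n+1)/2})` primitive solutions: given the preceding columns, the
next one lies on a quadric inside an affine subspace, on which `x ↦ x ⬝ᵥ x` has non-vanishing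
differential modulo `p`, up to a correction at `p = 2`.
-/

open Finset Matrix

section Counting

lemma card_le_card_pow_of_forall_mem {κ α : Type*} [Fintype κ]
    {T : Finset (κ → α)} {s : Finset α} (h : ∀ x ∈ T, ∀ i, x i ∈ s) :
    T.card ≤ s.card ^ Fintype.card κ := by
  classical
  rw [← card_univ, ← prod_const, ← Fintype.card_piFinset]
  exact card_le_card fun x hx => Fintype.mem_piFinset.2 (h x hx)

variable {ι α β R : Type*} [Fintype ι] [LinearOrder ι] [DecidableEq α]
  [CommSemiring R] [PartialOrder R] [IsOrderedRing R] [CanonicallyOrderedAdd R]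

lemma card_le_prod_of_card_image_le {S : Finset β} {e : β → ι → α} (he : Set.InjOn e S)
    (N : ι → R)
    (h : ∀ T ⊆ S, ∀ i, (∀ x ∈ T, ∀ y ∈ T, ∀ j < i, e x j = e y j) →
      ((T.image (e · i)).card : R) ≤ N i) :
    (S.card : R) ≤ ∏ i, N i := by
  suffices key : ∀ s : Finset ι, ∀ T ⊆ S, (∀ x ∈ T, ∀ y ∈ T, ∀ j ∉ s, e x j = e y j) →
      (T.card : R) ≤ ∏ i ∈ s, N i from key univ S subset_rfl (by simp)
  intro s
  induction s using Finset.induction_on_min with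
  | empty =>
    intro T hT hagree
    have : T.card ≤ 1 := card_le_one.2 fun x hx y hy =>
      he (hT hx) (hT hy) (funext fun j => hagree x hx y hy j (notMem_empty j))
    simpa using Nat.mono_cast (α := R) this
  | insert a s ha ih =>
    intro T hT hagree
    have hbelow : ∀ x ∈ T, ∀ y ∈ T, ∀ j < a, e x j = e y j := fun x hx y hy j hj =>
      hagree x hx y hy j <| by
        rw [mem_insert, not_or]
        exact ⟨hj.ne, fun hjs => (ha j hjs).asymm hj⟩
    have hfiber : ∀ v ∈ T.image (e · a), (({x ∈ T | e x a = v}.card : ℕ) : R) ≤ ∏ i ∈ s, N i :=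
      fun v _ => ih _ ((filter_subset _ T).trans hT) fun x hx y hy j hj => by
        rw [mem_filter] at hx hy
        rcases eq_or_ne j a with rfl | hja
        · exact hx.2.trans hy.2.symm
        · exact hagree x hx.1 y hy.1 j (by simp [hja, hj])
    rw [prod_insert fun has => (ha a has).false, card_eq_sum_card_image (e · a) T, Nat.cast_sum]
    calc ∑ v ∈ T.image (e · a), (({x ∈ T | e x a = v}.card : ℕ) : R)
        ≤ (T.image (e · a)).card * ∏ i ∈ s, N i := by
          simpa only [nsmul_eq_mul] using sum_le_card_nsmul _ _ _ hfiber
      _ ≤ N a * ∏ i ∈ s, N i := by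
          gcongr
          exact h T hT a hbelow

end Counting

section KernelModN

variable {ι : Type*} [Fintype ι]

lemma range_vecMulLinear_le_comap (B : Matrix ι ι ℤ) (N : ℕ) :
    B.vecMulLinear.toAddMonoidHom.range ≤
      (B.map (Int.castRingHom (ZMod N))).vecMulLinear.toAddMonoidHom.range.comap
        ((Int.castRingHom (ZMod N)).toAddMonoidHom.compLeft ι) := by
  rintro _ ⟨x, rfl⟩
  exact ⟨Int.castRingHom (ZMod N) ∘ x, funext fun i => (RingHom.map_vecMul _ B x i).symm⟩

variable [DecidableEq ι]

lemma index_range_vecMulLinear {B : Matrix ι ι ℤ} (hB : B.det ≠ 0) :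
    (B.vecMulLinear).toAddMonoidHom.range.index = B.det.natAbs := by
  have hinj : Function.Injective (B.vecMulLinear) := by
    rw [← LinearMap.ker_eq_bot, LinearMap.ker_eq_bot']
    intro x hx
    by_contra hne
    exact hB (Matrix.exists_vecMul_eq_zero_iff.1 ⟨x, hne, hx⟩)
  have hdet : LinearMap.det (B.vecMulLinear) = B.det := by
    rw [← det_transpose, ← LinearMap.det_toLin', toLin'_apply', mulVecLin_transpose]
  rw [← hdet]
  exact (Submodule.natAbs_det_equiv _ (LinearEquiv.ofInjective _ hinj)).symm

variable (B : Matrix ι ι ℤ) (N : ℕ) [NeZero N]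

lemma card_vecMul_eq_zero_eq_index :
    #{x : ι → ZMod N | x ᵥ* B.map (Int.castRingHom (ZMod N)) = 0} =
      ((B.map (Int.castRingHom (ZMod N))).vecMulLinear.toAddMonoidHom.range.comap
        ((Int.castRingHom (ZMod N)).toAddMonoidHom.compLeft ι)).index := by
  have hsurj : Function.Surjective ((Int.castRingHom (ZMod N)).toAddMonoidHom.compLeft ι) :=
    (ZMod.ringHom_surjective (Int.castRingHom (ZMod N))).comp_left
  rw [AddSubgroup.index_comap_of_surjective _ hsurj, AddSubgroup.index_range,
    ← Fintype.card_subtype, ← Nat.card_eq_fintype_card]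
  rfl

lemma card_vecMul_eq_zero_dvd :
    #{x : ι → ZMod N | x ᵥ* B.map (Int.castRingHom (ZMod N)) = 0} ∣ B.det.natAbs := by
  rcases eq_or_ne B.det 0 with hB | hB
  · simp [hB]
  · rw [card_vecMul_eq_zero_eq_index, ← index_range_vecMulLinear hB]
    exact AddSubgroup.index_dvd_of_le (range_vecMulLinear_le_comap B N)

variable {B N} in
lemma card_vecMul_eq_zero_of_det_dvd (hB : B.det ∣ N) :
    #{x : ι → ZMod N | x ᵥ* B.map (Int.castRingHom (ZMod N)) = 0} = B.det.natAbs := by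
  obtain ⟨d, hd⟩ := hB
  have hB0 : B.det ≠ 0 := by
    rintro h
    simp [h, NeZero.ne N] at hd
  rw [card_vecMul_eq_zero_eq_index, ← index_range_vecMulLinear hB0]
  refine congrArg _ (le_antisymm ?_ (range_vecMulLinear_le_comap B N))
  rintro x ⟨y, hy⟩
  obtain ⟨z, rfl⟩ := (ZMod.ringHom_surjective (Int.castRingHom (ZMod N))).comp_left y
  have hdvd : ∀ i, ∃ w, x i - (z ᵥ* B) i = N * w := fun i => by
    rw [← dvd_def, ← ZMod.intCast_zmod_eq_zero_iff_dvd, Int.cast_sub, sub_eq_zero]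
    exact (congrFun hy i).symm.trans (RingHom.map_vecMul (Int.castRingHom (ZMod N)) B z i).symm
  choose w hw using hdvd
  have hx : x = z ᵥ* B + (N : ℤ) • w := funext fun i => by
    rw [Pi.add_apply, Pi.smul_apply, smul_eq_mul, ← hw, add_sub_cancel]
  refine ⟨z + d • (w ᵥ* B.adjugate), ?_⟩
  calc (z + d • (w ᵥ* B.adjugate)) ᵥ* B = z ᵥ* B + d • B.det • w := by
        rw [add_vecMul, smul_vecMul, vecMul_vecMul, adjugate_mul, vecMul_smul, vecMul_one]
    _ = x := by rw [hx, hd, smul_smul, mul_comm]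

end KernelModN

section KernelModPrimePow

variable {ι κ γ : Type*} [Fintype ι] [Fintype κ]

lemma submatrix_vecMul_comp {R : Type*} [CommSemiring R] (M : Matrix ι γ R) (f : κ ↪ ι) (g : κ → γ)
    {x : ι → R} (hx : ∀ i ∉ Set.range f, x i = 0) :
    (x ∘ f) ᵥ* M.submatrix f g = (x ᵥ* M) ∘ g :=
  funext fun _ => Fintype.sum_of_injective f f.injective _ _
    (fun i hi => by rw [hx i hi, zero_mul]) fun _ => rfl

variable {p : ℕ} [Fact p.Prime] [DecidableEq κ]

lemma card_vecMul_eq_zero_le (r : ℕ) {B : Matrix κ κ ℤ} (hB : B.det ≠ 0) :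
    #{x : κ → ZMod (p ^ r) | x ᵥ* B.map (Int.castRingHom (ZMod (p ^ r))) = 0} ≤
      p ^ B.det.natAbs.factorization p := by
  have hp : p.Prime := Fact.out
  have hdvd : #{x : κ → ZMod (p ^ r) | x ᵥ* B.map (Int.castRingHom (ZMod (p ^ r))) = 0} ∣
      p ^ (r * Fintype.card κ) := by
    rw [card_vecMul_eq_zero_eq_index, AddSubgroup.index_comap_of_surjective _
      (ZMod.ringHom_surjective (Int.castRingHom (ZMod (p ^ r)))).comp_left]
    simpa [pow_mul] using AddSubgroup.index_dvd_card
      (B.map (Int.castRingHom (ZMod (p ^ r)))).vecMulLinear.toAddMonoidHom.range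
  obtain ⟨k, -, hk⟩ := (Nat.dvd_prime_pow hp).1 hdvd
  have hkdet := card_vecMul_eq_zero_dvd B (p ^ r)
  rw [hk] at hkdet ⊢
  exact Nat.pow_le_pow_right hp.pos
    ((hp.pow_dvd_iff_le_factorization (Int.natAbs_ne_zero.2 hB)).1 hkdet)

lemma card_le_of_vecMul_eq {r : ℕ} (X : Finset (ι → ZMod (p ^ r))) (M : Matrix ι γ ℤ)
    (t : γ → ZMod (p ^ r)) (hX : ∀ x ∈ X, x ᵥ* M.map (Int.castRingHom (ZMod (p ^ r))) = t)
    (f : κ ↪ ι) (g : κ → γ) (hM : (M.submatrix f g).det ≠ 0) :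
    X.card ≤ p ^ (M.submatrix f g).det.natAbs.factorization p *
      (p ^ r) ^ (Fintype.card ι - Fintype.card κ) := by
  classical
  let off : (ι → ZMod (p ^ r)) → ({i // i ∉ Set.range f} → ZMod (p ^ r)) := fun x i => x i
  have hoff : (X.image off).card ≤ (p ^ r) ^ (Fintype.card ι - Fintype.card κ) := by
    refine (card_le_univ _).trans_eq ?_
    rw [Fintype.card_fun, ZMod.card, Fintype.card_subtype_compl, Set.card_range_of_injective
      f.injective]
  refine (card_le_mul_card_image X _ fun b hb => ?_).trans (Nat.mul_le_mul_left _ hoff)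
  obtain ⟨y, hy, rfl⟩ := mem_image.1 hb
  refine le_trans (card_le_card_of_injOn (fun x => (x - y) ∘ f) ?_ ?_)
    (card_vecMul_eq_zero_le r hM)
  · intro x hx
    rw [mem_coe, mem_filter] at hx
    rw [mem_coe, mem_filter_univ, ← submatrix_map, submatrix_vecMul_comp, sub_vecMul, hX x hx.1,
      hX y hy, sub_self, Pi.zero_comp]
    exact fun i hi => sub_eq_zero.2 (congrFun hx.2 ⟨i, hi⟩)
  · intro x hx x' hx' hxx'
    rw [mem_coe, mem_filter] at hx hx'
    ext i
    by_cases hi : i ∈ Set.range f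
    · obtain ⟨k, rfl⟩ := hi
      exact sub_left_injective (congrFun hxx' k)
    · exact congrFun (hx.2.trans hx'.2.symm) ⟨i, hi⟩

end KernelModPrimePow

section HermiteForm

variable {ι : Type*} [LinearOrder ι]

/-- Upper triangular integer matrices of type `l`, that is, with diagonal entries `p ^ l i`. -/
structure IsPowTriangular (p : ℕ) (l : ι → ℕ) (H : Matrix ι ι ℤ) : Prop where
  upper : H.IsUpperTriangular
  diag : ∀ i, H i i = (p : ℤ) ^ l i

/-- Column-style Hermite normal forms with diagonal entries `p ^ l i`: the entries above the
diagonal are reduced modulo the diagonal entry of their column. These represent the orbits of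
`GL ι ℤ`, acting by left multiplication, on the matrices whose determinant is up to sign a power
of `p`. -/
structure IsHermiteForm (p : ℕ) (l : ι → ℕ) (H : Matrix ι ι ℤ) : Prop
    extends IsPowTriangular p l H where
  nonneg : ∀ i j, i < j → 0 ≤ H i j
  lt : ∀ i j, i < j → H i j < (p : ℤ) ^ l j

variable {p : ℕ} {l : ι → ℕ}

lemma IsHermiteForm.mem_Icc {H : Matrix ι ι ℤ} (hH : IsHermiteForm p l H) (i j : ι) :
    H i j ∈ Set.Icc (0 : ℤ) (p ^ l j) := by
  rcases lt_trichotomy i j with h | rfl | h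
  · exact ⟨hH.nonneg i j h, (hH.lt i j h).le⟩
  · rw [hH.diag]
    exact ⟨by positivity, le_rfl⟩
  · rw [hH.upper h]
    exact ⟨le_rfl, by positivity⟩

lemma IsHermiteForm.ext_col {H H' : Matrix ι ι ℤ} (hH : IsHermiteForm p l H)
    (hH' : IsHermiteForm p l H') {j : ι}
    (h : ∀ i < j, (H i j : ZMod (p ^ l j)) = H' i j) : H.col j = H'.col j := by
  ext i
  change H i j = H' i j
  rcases lt_trichotomy i j with hij | rfl | hij
  · have hmod := h i hij
    rw [ZMod.intCast_eq_intCast_iff, Int.ModEq, Nat.cast_pow] at hmod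
    rwa [Int.emod_eq_of_lt (hH.nonneg _ _ hij) (hH.lt _ _ hij),
      Int.emod_eq_of_lt (hH'.nonneg _ _ hij) (hH'.lt _ _ hij)] at hmod
  · rw [hH.diag, hH'.diag]
  · rw [hH.upper hij, hH'.upper hij]

lemma finite_setOf_isHermiteForm [Finite ι] (p : ℕ) (l : ι → ℕ) :
    {H | IsHermiteForm p l H}.Finite :=
  (Set.Finite.pi' fun _ => Set.Finite.pi' fun j => Set.finite_Icc (0 : ℤ) (p ^ l j)).subset
    fun _ hH => IsHermiteForm.mem_Icc hH

variable [Fintype ι]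

lemma IsPowTriangular.det_eq {H : Matrix ι ι ℤ} (hH : IsPowTriangular p l H) :
    H.det = (p : ℤ) ^ ∑ i, l i := by
  rw [det_of_isUpperTriangular hH.upper, ← prod_pow_eq_pow_sum]
  exact prod_congr rfl fun i _ => hH.diag i

lemma IsPowTriangular.mul {l' : ι → ℕ} {H H' : Matrix ι ι ℤ} (hH : IsPowTriangular p l H)
    (hH' : IsPowTriangular p l' H') : IsPowTriangular p (l + l') (H * H') where
  upper := BlockTriangular.mul hH.upper hH'.upper
  diag i := by
    rw [mul_apply, sum_eq_single i, hH.diag, hH'.diag, Pi.add_apply, pow_add]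
    · intro j _ hj
      rcases hj.lt_or_gt with hji | hij
      · rw [hH.upper hji, zero_mul]
      · rw [hH'.upper hij, mul_zero]
    · simp

lemma IsPowTriangular.transpose_mul_row_eq [NeZero p] {γ : Type*} {H H' : Matrix ι ι ℤ}
    {Y Y' : Matrix ι γ ℤ} (hH : IsPowTriangular p l H) (hH' : IsPowTriangular p l H')
    (hY : Hᵀ * Y = H'ᵀ * Y') {i : ι} (hcol : ∀ j < i, H.col j = H'.col j) :
    ∀ a < i, Y a = Y' a := by
  have hentry : ∀ a < i, ∀ b, H b a = H' b a := fun a ha => congrFun (hcol a ha)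
  intro a
  induction a using WellFoundedLT.induction with
  | ind a ih =>
    intro ha
    ext c
    have hmul : ∑ b, (H b a * Y b c - H' b a * Y' b c) = 0 := by
      rw [sum_sub_distrib, sub_eq_zero]
      exact congrFun (congrFun hY a) c
    rw [sum_eq_single a, ← hentry a ha, ← mul_sub, hH.diag] at hmul
    · exact sub_eq_zero.1 ((mul_eq_zero.1 hmul).resolve_left
        (pow_ne_zero _ (Nat.cast_ne_zero.2 (NeZero.ne p))))
    · intro b _ hb
      rcases hb.lt_or_gt with hba | hab
      · rw [ih b hba (hba.trans ha), hentry a ha, sub_self]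
      · rw [hH.upper hab, hH'.upper hab, zero_mul, zero_mul, sub_self]
    · simp

end HermiteForm

section Beta

variable {p : ℕ}

lemma epow_coe (p : ℕ) (z : ℤ) : epow p (z : WithTop ℤ) = (p : ℝ≥0∞) ^ z := rfl

lemma epow_top (p : ℕ) : epow p ⊤ = ⊤ := rfl

lemma epow_add [NeZero p] (a b : WithTop ℤ) : epow p (a + b) = epow p a * epow p b := by
  have hp : (p : ℝ≥0∞) ≠ 0 := Nat.cast_ne_zero.2 (NeZero.ne p)
  have hpos (z : ℤ) : (p : ℝ≥0∞) ^ z ≠ 0 := (ENNReal.zpow_pos hp (ENNReal.natCast_ne_top p) z).ne'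
  induction a with
  | top =>
    induction b with
    | top => simp [epow_top]
    | coe b => simp [epow_top, epow_coe, ENNReal.top_mul, hpos]
  | coe a =>
    induction b with
    | top => simp [epow_top, epow_coe, ENNReal.mul_top, hpos]
    | coe b => rw [← WithTop.coe_add, epow_coe, epow_coe, epow_coe,
        ENNReal.zpow_add hp (ENNReal.natCast_ne_top p)]

lemma epow_sum [NeZero p] {ι : Type*} (s : Finset ι) (b : ι → WithTop ℤ) :
    epow p (∑ i ∈ s, b i) = ∏ i ∈ s, epow p (b i) := by
  classical
  induction s using Finset.induction_on with
  | empty => simpa using epow_coe p 0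
  | insert a s ha ih => rw [sum_insert ha, prod_insert ha, epow_add, ih]

lemma epow_mono [NeZero p] : Monotone (epow p) := by
  intro a b hab
  induction b with
  | top => exact le_top
  | coe b =>
    lift a to ℤ using ne_top_of_le_ne_top WithTop.coe_ne_top hab
    exact ENNReal.zpow_le_of_le (by exact_mod_cast NeZero.one_le) (WithTop.coe_le_coe.1 hab)

lemma epow_inf [NeZero p] {ι : Type*} (s : Finset ι) (b : ι → WithTop ℤ) :
    epow p (s.inf b) = s.inf fun i => epow p (b i) :=
  apply_inf_eq_inf_comp_of_linearOrder _ epow_mono rfl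

lemma add_finset_inf {ι : Type*} (s : Finset ι) (z : WithTop ℤ) (b : ι → WithTop ℤ) :
    z + s.inf b = s.inf fun i => z + b i :=
  apply_inf_eq_inf_comp_of_linearOrder (z + ·) (fun _ _ h => add_le_add_right h z) (add_top z)

lemma natCast_le_epow_sub_add_opVal [NeZero p] {N a b : ℕ} {k : ℤ}
    (h : k ≠ 0 → N * p ^ b ≤ p ^ (a + k.natAbs.factorization p)) :
    (N : ℝ≥0∞) ≤ epow p (((a - b : ℤ) : WithTop ℤ) + opVal p k) := by
  rw [opVal]
  split_ifs with hk
  · exact le_top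
  · have hp : (p : ℝ≥0∞) ≠ 0 := Nat.cast_ne_zero.2 (NeZero.ne p)
    rw [← WithTop.coe_add, epow_coe, sub_add_eq_add_sub,
      ENNReal.zpow_sub hp (ENNReal.natCast_ne_top p), ← div_eq_mul_inv, ENNReal.le_div_iff_mul_le
        (Or.inl (ENNReal.zpow_pos hp (ENNReal.natCast_ne_top p) b).ne')
        (Or.inl (ENNReal.zpow_ne_top hp (ENNReal.natCast_ne_top p) b))]
    exact_mod_cast h hk

lemma natCast_le_epow_betaExp [NeZero p] {n : ℕ} {Λ : Matrix (Fin n) (Fin n) ℤ} {l : Fin n → ℕ}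
    {i : Fin n} {N : ℕ} (h0 : N ≤ p ^ (i * l i))
    (h : ∀ A : Finset (Fin n), #A ≤ i → muMinor Λ A ≠ 0 →
      N * p ^ (∑ k : Fin #A, l (Fin.castLE (card_finset_fin_le A) k)) ≤
        p ^ ((i - #A) * l i + (muMinor Λ A).natAbs.factorization p)) :
    (N : ℝ≥0∞) ≤ epow p (betaExp p n Λ l (i + 1)) := by
  have hi : (i : ℕ) + 1 - 1 = i := rfl
  simp only [betaExp, hi, i.2, dite_true, Fin.eta]
  rw [epow_mono.map_min, le_min_iff, epow_inf, Finset.le_inf_iff]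
  refine ⟨?_, fun j hj => ?_⟩
  · rw [epow_coe, Nat.cast_succ, add_sub_cancel_right]
    exact_mod_cast h0
  · rw [add_finset_inf, epow_inf, Finset.le_inf_iff]
    intro A hA
    obtain rfl := (mem_powersetCard.1 hA).2
    have hA : #A ≤ i := (mem_Icc.1 hj).2
    have hsum : ∑ k ∈ range #A, (if h : k < n then (l ⟨k, h⟩ : ℤ) else 0) =
        (∑ k : Fin #A, l (Fin.castLE (card_finset_fin_le A) k) : ℕ) := by
      rw [← Fin.sum_univ_eq_sum_range (fun k => if h : k < n then (l ⟨k, h⟩ : ℤ) else 0),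
        Nat.cast_sum]
      exact sum_congr rfl fun k _ => dif_pos (k.2.trans_le (card_finset_fin_le A))
    have hcoeff : ((i : ℕ) + 1 : ℕ) - (1 : ℤ) - #A = (i - #A : ℕ) := by
      push_cast [hA]
      ring
    rw [hsum, hcoeff, ← Nat.cast_mul]
    exact natCast_le_epow_sub_add_opVal (h A hA)

lemma betaExp_one (p n : ℕ) (Λ : Matrix (Fin n) (Fin n) ℤ) (l : Fin n → ℕ) :
    betaExp p n Λ l 1 = 0 := by
  simp [betaExp]

lemma prod_epow_betaExp [NeZero p] (n : ℕ) (Λ : Matrix (Fin n) (Fin n) ℤ) (l : Fin n → ℕ) :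
    ∏ i : Fin n, epow p (betaExp p n Λ l (i + 1)) =
      epow p (∑ i ∈ Icc 2 n, betaExp p n Λ l i) := by
  rw [← epow_sum, Fin.sum_univ_eq_sum_range fun i => betaExp p n Λ l (i + 1), range_eq_Ico,
    sum_Ico_add' (betaExp p n Λ l) 0 n 1]
  rcases n.eq_zero_or_pos with rfl | hn
  · simp
  · rw [sum_eq_sum_Ico_succ_bot (by lia), betaExp_one, zero_add]
    rfl

end Beta

section HermiteDivisors

variable {p n : ℕ} {l : Fin n → ℕ} {Λ : Matrix (Fin n) (Fin n) ℤ}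

lemma IsPowTriangular.muMinor_transpose_mul {H : Matrix (Fin n) (Fin n) ℤ}
    (hH : IsPowTriangular p l H) (Y : Matrix (Fin n) (Fin n) ℤ) (A : Finset (Fin n)) :
    muMinor (Hᵀ * Y) A =
      (p : ℤ) ^ (∑ k : Fin #A, l (Fin.castLE (card_finset_fin_le A) k)) * muMinor Y A := by
  set f : Fin #A → Fin n := Fin.castLE (card_finset_fin_le A)
  set g : Fin #A → Fin n := fun k => A.orderIsoOfFin rfl k
  have hsub : (Hᵀ * Y).submatrix f g = (H.submatrix f f)ᵀ * Y.submatrix f g := by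
    ext i k
    refine (Fintype.sum_of_injective f (Fin.castLE_injective _) _ _ (fun b hb => ?_)
      fun _ => rfl).symm
    have hib : f i < b := by
      by_contra! hbi
      exact hb ⟨⟨b, (Fin.le_def.1 hbi).trans_lt i.2⟩, rfl⟩
    exact mul_eq_zero_of_left (hH.upper hib) _
  have hHf : IsPowTriangular p (l ∘ f) (H.submatrix f f) :=
    ⟨fun i j hij => hH.upper (by exact hij), fun i => hH.diag (f i)⟩
  change ((Hᵀ * Y).submatrix f g).det = _ * (Y.submatrix f g).det
  rw [hsub, det_mul, det_transpose, hHf.det_eq]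
  rfl

/-- The Hermite forms `H` of type `l` such that `Hᵀ` divides `Λ` from the left. -/
def hermiteDivisors (p : ℕ) (Λ : Matrix (Fin n) (Fin n) ℤ) (l : Fin n → ℕ) :
    Set (Matrix (Fin n) (Fin n) ℤ) :=
  {H | IsHermiteForm p l H ∧ ∃ Y, Hᵀ * Y = Λ}

lemma finite_hermiteDivisors (p : ℕ) (Λ : Matrix (Fin n) (Fin n) ℤ) (l : Fin n → ℕ) :
    (hermiteDivisors p Λ l).Finite :=
  (finite_setOf_isHermiteForm p l).subset fun _ hH => hH.1

/-- The entries above the diagonal of the `i`-th column of `H`, modulo `p ^ l i`. -/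
def colResidue (p : ℕ) (l : Fin n → ℕ) (i : Fin n) (H : Matrix (Fin n) (Fin n) ℤ) :
    Set.Iio i → ZMod (p ^ l i) :=
  fun a => H a i

lemma colResidue_vecMul {H Y : Matrix (Fin n) (Fin n) ℤ} (hH : IsPowTriangular p l H)
    (hY : Hᵀ * Y = Λ) (i : Fin n) :
    colResidue p l i H ᵥ* (Y.submatrix ((↑) : Set.Iio i → Fin n) id).map
        (Int.castRingHom (ZMod (p ^ l i))) =
      fun c => (Λ i c : ZMod (p ^ l i)) := by
  ext c
  rw [← hY, mul_apply, Int.cast_sum]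
  refine Fintype.sum_of_injective _ Subtype.val_injective _ _ (fun b hb => ?_) fun a => ?_
  · rw [transpose_apply]
    rcases (not_lt.1 fun h => hb ⟨⟨b, h⟩, rfl⟩ : i ≤ b).eq_or_lt with rfl | hib
    · rw [hH.diag, Int.cast_mul, Int.cast_pow, Int.cast_natCast, ← Nat.cast_pow,
        ZMod.natCast_self, zero_mul]
    · rw [hH.upper hib, zero_mul, Int.cast_zero]
  · simp [colResidue]

lemma colResidue_vecMul_of_col_eq [NeZero p] {H H' Y Y' : Matrix (Fin n) (Fin n) ℤ}
    (hH : IsPowTriangular p l H) (hH' : IsPowTriangular p l H') (hY : Hᵀ * Y = Λ)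
    (hY' : H'ᵀ * Y' = Λ) {i : Fin n} (hcol : ∀ j < i, H.col j = H'.col j) :
    colResidue p l i H ᵥ* (Y'.submatrix ((↑) : Set.Iio i → Fin n) id).map
        (Int.castRingHom (ZMod (p ^ l i))) =
      fun c => (Λ i c : ZMod (p ^ l i)) := by
  have hrows : Y'.submatrix ((↑) : Set.Iio i → Fin n) id = Y.submatrix (↑) id := by
    ext a c
    exact (congrFun (hH.transpose_mul_row_eq hH' (hY.trans hY'.symm) hcol a a.2) c).symm
  rw [hrows, colResidue_vecMul hH hY i]

variable {S : Finset (Matrix (Fin n) (Fin n) ℤ)} {i : Fin n}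

lemma card_image_col_le_card_image_colResidue (hS : ∀ H ∈ S, IsHermiteForm p l H) (i : Fin n) :
    #(S.image (·.col i)) ≤ #(S.image (colResidue p l i)) := by
  refine card_le_card_of_injOn (fun x a => (x a : ZMod (p ^ l i))) ?_ ?_
  · intro x hx
    rw [mem_coe, mem_image] at hx ⊢
    obtain ⟨H, hH, rfl⟩ := hx
    exact ⟨H, hH, rfl⟩
  · intro x hx y hy hxy
    rw [mem_coe, mem_image] at hx hy
    obtain ⟨H, hH, rfl⟩ := hx
    obtain ⟨H', hH', rfl⟩ := hy
    exact (hS H hH).ext_col (hS H' hH') fun a ha => congrFun hxy ⟨a, ha⟩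

lemma card_image_colResidue_mul_le [Fact p.Prime] (hS : ∀ H ∈ S, H ∈ hermiteDivisors p Λ l)
    (hcol : ∀ H ∈ S, ∀ H' ∈ S, ∀ j < i, H.col j = H'.col j) {A : Finset (Fin n)} (hA : #A ≤ i)
    (hΛ : muMinor Λ A ≠ 0) :
    #(S.image (colResidue p l i)) * p ^ (∑ k : Fin #A, l (Fin.castLE (card_finset_fin_le A) k)) ≤
      p ^ ((i - #A) * l i + (muMinor Λ A).natAbs.factorization p) := by
  have hp : p.Prime := Fact.out
  rcases S.eq_empty_or_nonempty with rfl | ⟨H₀, hH₀⟩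
  · simp
  obtain ⟨hH₀', Y, rfl⟩ := hS H₀ hH₀
  rw [hH₀'.muMinor_transpose_mul] at hΛ ⊢
  have hY : muMinor Y A ≠ 0 := right_ne_zero_of_mul hΛ
  have hX : ∀ x ∈ S.image (colResidue p l i),
      x ᵥ* (Y.submatrix ((↑) : Set.Iio i → Fin n) id).map (Int.castRingHom (ZMod (p ^ l i))) =
        fun c => ((H₀ᵀ * Y) i c : ZMod (p ^ l i)) := by
    intro x hx
    obtain ⟨H, hH, rfl⟩ := mem_image.1 hx
    obtain ⟨hH', Y', hY'⟩ := hS H hH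
    exact colResidue_vecMul_of_col_eq hH'.toIsPowTriangular hH₀'.toIsPowTriangular hY' rfl
      (hcol H hH H₀ hH₀)
  let f : Fin #A ↪ Set.Iio i :=
    ⟨fun k => ⟨Fin.castLE (card_finset_fin_le A) k, Fin.lt_def.2 (k.2.trans_le hA)⟩,
      fun k k' h => Fin.castLE_injective (card_finset_fin_le A) (Subtype.ext_iff.1 h)⟩
  have hcard : #(S.image (colResidue p l i)) ≤
      p ^ (muMinor Y A).natAbs.factorization p * (p ^ l i) ^ (i - #A) := by
    have hIio : Fintype.card (Set.Iio i) = i := by simp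
    have := card_le_of_vecMul_eq _ _ _ hX f (fun k => (A.orderIsoOfFin rfl k : Fin n)) hY
    rwa [hIio, Fintype.card_fin] at this
  set s := ∑ k : Fin #A, l (Fin.castLE (card_finset_fin_le A) k)
  have hval : ((p : ℤ) ^ s * muMinor Y A).natAbs.factorization p =
      s + (muMinor Y A).natAbs.factorization p := by
    rw [Int.natAbs_mul, Int.natAbs_pow, Int.natAbs_natCast,
      Nat.factorization_mul (pow_ne_zero _ hp.ne_zero) (Int.natAbs_ne_zero.2 hY)]
    simp [hp.factorization_self]
  rw [hval]
  refine (Nat.mul_le_mul_right _ hcard).trans_eq ?_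
  ring

lemma card_image_col_le [Fact p.Prime] (hS : ∀ H ∈ S, H ∈ hermiteDivisors p Λ l)
    (hcol : ∀ H ∈ S, ∀ H' ∈ S, ∀ j < i, H.col j = H'.col j) :
    (#(S.image (·.col i)) : ℝ≥0∞) ≤ epow p (betaExp p n Λ l (i + 1)) := by
  have hres := card_image_col_le_card_image_colResidue (fun H hH => (hS H hH).1) i
  refine (Nat.cast_le.2 hres).trans
    (natCast_le_epow_betaExp ((card_le_univ _).trans_eq ?_)
      fun A hA hΛ => card_image_colResidue_mul_le hS hcol hA hΛ)
  simp [← pow_mul, mul_comm]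

lemma ncard_hermiteDivisors_le [Fact p.Prime] (Λ : Matrix (Fin n) (Fin n) ℤ) (l : Fin n → ℕ) :
    ((hermiteDivisors p Λ l).ncard : ℝ≥0∞) ≤ epow p (∑ i ∈ Icc 2 n, betaExp p n Λ l i) := by
  classical
  rw [Set.ncard_eq_toFinset_card _ (finite_hermiteDivisors p Λ l), ← prod_epow_betaExp]
  have hinj : Function.Injective (col : Matrix (Fin n) (Fin n) ℤ → Fin n → Fin n → ℤ) :=
    fun _ _ h => transpose_injective (funext fun j => congrFun h j)
  refine card_le_prod_of_card_image_le hinj.injOn _ fun T hT i hagree =>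
    card_image_col_le (fun H hH => ?_) fun H hH H' hH' j hj => hagree H hH H' hH' j hj
  exact (Set.Finite.mem_toFinset _).1 (hT hH)

end HermiteDivisors

section FieldLinearAlgebra

variable {F V κ ι : Type*} [Field F] [AddCommGroup V] [Module F V] [Fintype κ]

lemma card_mul_card_le_of_card_line_le [Fintype F] [Finite V] [DecidableEq V] {W : Submodule F V}
    {T : Finset V} (hTW : ∀ x ∈ T, ∀ y ∈ T, x - y ∈ W) {v : V} (hv : v ∈ W) {d : ℕ}
    (hd : ∀ x ∈ T, #{s : F | x + s • v ∈ T} ≤ d) :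
    T.card * Fintype.card F ≤ d * Nat.card W := by
  rcases T.eq_empty_or_nonempty with rfl | ⟨u, hu⟩
  · simp
  let f : V × F → V := fun y => y.1 - u + y.2 • v
  have hfiber : ∀ w ∈ (T ×ˢ univ).image f, #{y ∈ T ×ˢ univ | f y = w} ≤ d := by
    intro w hw
    obtain ⟨⟨x, s⟩, hxs, rfl⟩ := mem_image.1 hw
    refine le_trans (card_le_card_of_injOn (fun y => s - y.2) ?_ ?_) (hd x (mem_product.1 hxs).1)
    · rintro ⟨x', s'⟩ hy
      obtain ⟨hx', hf⟩ := mem_filter.1 hy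
      have : x + (s - s') • v = x' := by
        rw [sub_smul, ← sub_eq_zero, ← sub_eq_zero.2 hf.symm]
        simp only [f]
        abel
      simpa [this] using (mem_product.1 hx').1
    · rintro ⟨x₁, s₁⟩ h₁ ⟨x₂, s₂⟩ h₂ hs
      obtain rfl : s₁ = s₂ := sub_right_injective hs
      have := (mem_filter.1 h₁).2.trans (mem_filter.1 h₂).2.symm
      simpa [f] using this
  have himage : ((T ×ˢ univ).image f).card ≤ Nat.card W := by
    rw [← Set.ncard_coe_finset]
    refine Set.ncard_le_ncard ?_ (Set.toFinite _)
    intro w hw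
    obtain ⟨y, hy, rfl⟩ := mem_image.1 hw
    exact W.add_mem (hTW _ (mem_product.1 hy).1 u hu) (W.smul_mem _ hv)
  calc T.card * Fintype.card F = (T ×ˢ univ).card := by rw [card_product, card_univ]
    _ ≤ d * ((T ×ˢ univ).image f).card := card_le_mul_card_image _ _ hfiber
    _ ≤ d * Nat.card W := Nat.mul_le_mul_left _ himage

lemma exists_dotProduct_ne_zero_of_notMem_span {a : ι → κ → F} {x : κ → F}
    (hx : x ∉ Submodule.span F (Set.range a)) :
    ∃ v, (∀ j, a j ⬝ᵥ v = 0) ∧ v ⬝ᵥ x ≠ 0 := by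
  classical
  obtain ⟨f, hfx, hf⟩ := Submodule.exists_dual_map_eq_bot_of_notMem hx inferInstance
  obtain ⟨v, rfl⟩ := (dotProductEquiv F κ).surjective f
  refine ⟨v, fun j => ?_, hfx⟩
  rw [dotProduct_comm]
  exact Submodule.map_le_iff_le_comap.1 hf.le (Submodule.subset_span ⟨j, rfl⟩)

variable [Fintype ι]

lemma finrank_ker_mulVecLin {A : Matrix ι κ F} (hA : LinearIndependent F A.row) :
    Module.finrank F A.mulVecLin.ker = Fintype.card κ - Fintype.card ι := by
  have := A.mulVecLin.finrank_range_add_finrank_ker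
  rw [← Matrix.rank, hA.rank_matrix, Module.finrank_fintype_fun_eq_card] at this
  exact Nat.eq_sub_of_add_eq' this

lemma exists_basis_sum_extending [FiniteDimensional F V] {v : ι → V}
    (hv : LinearIndependent F v) :
    ∃ b : Module.Basis (ι ⊕ Fin (Module.finrank F V - Fintype.card ι)) F V,
      ∀ i, b (.inl i) = v i := by
  let b := Module.Basis.sumExtend hv
  have : Finite (ι ⊕ Module.Basis.sumExtendIndex hv) := Module.Finite.finite_basis b
  have : Finite (Module.Basis.sumExtendIndex hv) := .of_injective _ (Sum.inr_injective (α := ι))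
  have hcard : Nat.card (Module.Basis.sumExtendIndex hv) =
      Module.finrank F V - Fintype.card ι := by
    rw [Module.finrank_eq_nat_card_basis b, Nat.card_sum, Nat.card_eq_fintype_card (α := ι),
      Nat.add_sub_cancel_left]
  refine ⟨b.reindex ((Equiv.refl ι).sumCongr (Finite.equivFinOfCardEq hcard)), fun i => ?_⟩
  simp [b, Module.Basis.sumExtend]
  rfl

end FieldLinearAlgebra

section QuadricSlice

variable {R F κ ι : Type*} [CommRing R] [Field F] [Fintype κ]

/-- The vectors `x` over `R` with prescribed products `a j ⬝ᵥ x = t j` and `x ⬝ᵥ x = t₀` whose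
reduction along `φ : R →+* F` is independent of the reductions of the `a j`. Counting them bounds
the number of ways to append a column to a matrix with prescribed Gram matrix. -/
def quadricSlice (φ : R →+* F) (a : ι → κ → R) (t : ι → R) (t₀ : R) : Set (κ → R) :=
  {x | (∀ j, a j ⬝ᵥ x = t j) ∧ x ⬝ᵥ x = t₀ ∧
    φ ∘ x ∉ Submodule.span F (Set.range fun j => φ ∘ a j)}

lemma comp_mem_quadricSlice {φ : R →+* F} {a : ι → κ → R} {t : ι → R} {t₀ : R} {x : κ → R}
    (hx : x ∈ quadricSlice φ a t t₀) :
    φ ∘ x ∈ quadricSlice (RingHom.id F) (fun j => φ ∘ a j) (φ ∘ t) (φ t₀) := by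
  refine ⟨fun j => ?_, ?_, hx.2.2⟩
  · rw [← RingHom.map_dotProduct, hx.1, Function.comp_apply]
  · rw [← RingHom.map_dotProduct, hx.2.1]

lemma card_line_inter_quadric_le [Fintype F] [DecidableEq F] (h2 : (2 : F) ≠ 0) {x v : κ → F}
    (hv : v ⬝ᵥ v = 0 → x ⬝ᵥ v ≠ 0) :
    #{s : F | (x + s • v) ⬝ᵥ (x + s • v) = x ⬝ᵥ x} ≤ 2 := by
  refine (card_le_card (t := {0, -(2 * (x ⬝ᵥ v)) / (v ⬝ᵥ v)}) fun s hs => ?_).trans card_le_two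
  have hroot : s * (2 * (x ⬝ᵥ v) + s * (v ⬝ᵥ v)) = 0 := by
    have := mem_filter_univ _ |>.1 hs
    simp only [add_dotProduct, dotProduct_add, smul_dotProduct, dotProduct_smul, smul_eq_mul,
      dotProduct_comm v x] at this
    linear_combination this
  rw [mem_insert, mem_singleton]
  refine (mul_eq_zero.1 hroot).imp_right fun hs => ?_
  have hvv : v ⬝ᵥ v ≠ 0 := fun h => hv h <| by simpa [h, h2] using hs
  rw [eq_div_iff hvv]
  linear_combination hs

/-- A direction `v` orthogonal to the `a j` such that no line parallel to `v` lies in the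
slice: take any anisotropic one, or, if they are all isotropic, any one not orthogonal to `x`. -/
lemma exists_direction_of_mem_quadricSlice (h2 : (2 : F) ≠ 0) {a : ι → κ → F} {t : ι → F} {t₀ : F}
    {u : κ → F} (hu : u ∈ quadricSlice (RingHom.id F) a t t₀) :
    ∃ v, (∀ j, a j ⬝ᵥ v = 0) ∧
      ∀ x ∈ quadricSlice (RingHom.id F) a t t₀, v ⬝ᵥ v = 0 → x ⬝ᵥ v ≠ 0 := by
  by_cases! haniso : ∃ v, (∀ j, a j ⬝ᵥ v = 0) ∧ v ⬝ᵥ v ≠ 0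
  · obtain ⟨v, hva, hvv⟩ := haniso
    exact ⟨v, hva, fun _ _ h => absurd h hvv⟩
  obtain ⟨v, hva, hvu⟩ : ∃ v, (∀ j, a j ⬝ᵥ v = 0) ∧ v ⬝ᵥ u ≠ 0 :=
    exists_dotProduct_ne_zero_of_notMem_span hu.2.2
  refine ⟨v, hva, fun x hx _ hxv => hvu ?_⟩
  have hsub : ∀ j, a j ⬝ᵥ (x - u) = 0 := fun j => by
    rw [dotProduct_sub, hx.1, hu.1, sub_self]
  have hpolar : (x - u + v) ⬝ᵥ (x - u + v) = 0 := haniso _ fun j => by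
    rw [dotProduct_add, hsub, hva, add_zero]
  have huv : 2 * (v ⬝ᵥ u) = 0 := by
    have hxu := haniso _ hsub
    have hvv := haniso v hva
    simp only [add_dotProduct, dotProduct_add, sub_dotProduct, dotProduct_sub, dotProduct_comm v x,
      dotProduct_comm v u, hxv] at hpolar hxu hvv ⊢
    linear_combination -hpolar + hxu + hvv
  exact (mul_eq_zero.1 huv).resolve_left h2

lemma card_le_of_subset_quadricSlice_id [Fintype F] [Fintype ι] (h2 : (2 : F) ≠ 0)
    {a : ι → κ → F} (ha : LinearIndependent F a) {t : ι → F} {t₀ : F} {T : Finset (κ → F)}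
    (hT : ↑T ⊆ quadricSlice (RingHom.id F) a t t₀) :
    T.card ≤ 2 * Fintype.card F ^ (Fintype.card κ - 1 - Fintype.card ι) := by
  classical
  rcases T.eq_empty_or_nonempty with rfl | ⟨u, hu⟩
  · simp
  obtain ⟨v, hva, hv⟩ := exists_direction_of_mem_quadricSlice h2 (hT hu)
  have hker : ∀ w, w ∈ (Matrix.of a).mulVecLin.ker ↔ ∀ j, a j ⬝ᵥ w = 0 := fun w => funext_iff
  have hcount := card_mul_card_le_of_card_line_le (F := F) (T := T) (v := v) (d := 2)
    (W := (Matrix.of a).mulVecLin.ker) ?_ ((hker v).2 hva) ?_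
  · rw [Module.natCard_eq_pow_finrank (K := F), finrank_ker_mulVecLin (A := .of a) ha,
      Nat.card_eq_fintype_card] at hcount
    have hlt := (linearIndependent_option'.2 ⟨ha, (hT hu).2.2⟩).fintype_card_le_finrank
    rw [Fintype.card_option, Module.finrank_fintype_fun_eq_card] at hlt
    rw [show Fintype.card κ - Fintype.card ι = Fintype.card κ - 1 - Fintype.card ι + 1 by omega,
      pow_succ, ← mul_assoc] at hcount
    exact Nat.le_of_mul_le_mul_right hcount Fintype.card_pos
  · exact fun x hx y hy => (hker _).2 fun j => by
      rw [dotProduct_sub, (hT hx).1, (hT hy).1, sub_self]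
  · intro x hx
    refine (card_le_card (monotone_filter_right _ fun s _ hs => ?_)).trans
      (card_line_inter_quadric_le h2 (hv x (hT hx)))
    exact (hT hs).2.1.trans (hT hx).2.1.symm

end QuadricSlice

section LocalRing

lemma comp_eq_comp_of_sub_eq_smul {R S κ : Type*} [Ring R] [Ring S] {φ : R →+* S} {c π : R}
    (hπ : φ π = 0) {x y : κ → R} (h : ∃ z, x - y = (c * π) • z) : φ ∘ x = φ ∘ y := by
  obtain ⟨z, hz⟩ := h
  rw [sub_eq_iff_eq_add'.1 hz]
  ext i
  simp [hπ]

variable {R F κ ι E : Type*} [CommRing R] [Field F] [Fintype κ] {φ : R →+* F} [IsLocalHom φ]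

lemma eq_zero_of_dotProduct_eq_zero_of_basis {g : ι → κ → R} (b : Module.Basis ι F (κ → F))
    (hb : ∀ i, b i = φ ∘ g i) {d : κ → R} (hd : ∀ i, g i ⬝ᵥ d = 0) : d = 0 := by
  classical
  let e := (Pi.basisFun F κ).indexEquiv b
  let G : Matrix κ κ R := .of (g ∘ e)
  have hrow : (φ.mapMatrix G).row = b ∘ e := funext fun k => (hb (e k)).symm
  have hdet : IsUnit (φ.mapMatrix G).det :=
    (isUnit_iff_isUnit_det _).1 <| linearIndependent_rows_iff_isUnit.1 <| by
      rw [hrow]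
      exact b.linearIndependent.comp e e.injective
  rw [← RingHom.map_det] at hdet
  have hG : IsUnit G := (isUnit_iff_isUnit_det _).2 (isUnit_of_map_unit φ G.det hdet)
  refine mulVec_injective_of_isUnit hG ?_
  rw [mulVec_zero]
  exact funext fun k => hd (e k)

variable {a : ι → κ → R} {t : ι → R} {t₀ π : R}

lemma two_smul_sub_eq_zero_of_mem_quadricSlice (hπ : φ π = 0) {e : E → κ → R} {x y z : κ → R}
    (b : Module.Basis (Option ι ⊕ E) F (κ → F)) (hby : b (.inl none) = φ ∘ y)
    (hba : ∀ j, b (.inl (some j)) = φ ∘ a j) (hbe : ∀ k, b (.inr k) = φ ∘ e k)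
    (hx : x ∈ quadricSlice φ a t t₀) (hy : y ∈ quadricSlice φ a t t₀)
    (hxy : x - y = (2 * π) • z) (he : ∀ k, e k ⬝ᵥ (x - y) = 0) : (2 : R) • (x - y) = 0 := by
  refine eq_zero_of_dotProduct_eq_zero_of_basis (φ := φ) b
    (g := Sum.elim (fun o => o.elim (y + π • z) a) e) ?_ ?_
  · rintro ((_ | j) | k)
    · rw [hby]
      ext i
      simp [hπ]
    · exact hba j
    · exact hbe k
  · rintro ((_ | j) | k)
    · have hsq : x ⬝ᵥ x = y ⬝ᵥ y := hx.2.1.trans hy.2.1.symm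
      rw [sub_eq_iff_eq_add'.1 hxy] at hsq
      change (y + π • z) ⬝ᵥ ((2 : R) • (x - y)) = 0
      rw [hxy]
      simp only [add_dotProduct, dotProduct_add, smul_dotProduct, dotProduct_smul, smul_eq_mul,
        dotProduct_comm z y] at hsq ⊢
      linear_combination hsq
    · change a j ⬝ᵥ ((2 : R) • (x - y)) = 0
      rw [dotProduct_smul, dotProduct_sub, hx.1, hy.1, sub_self, smul_zero]
    · change e k ⬝ᵥ ((2 : R) • (x - y)) = 0
      rw [dotProduct_smul, he, smul_zero]

variable [DecidableEq R] [DecidableEq F] [Fintype ι]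

/-- Modulo `2 * π` the slice is smooth: completing its tangent functionals at `u` to a basis by
further functionals `e`, the values of `e` determine a solution up to 2-torsion. -/
lemma card_le_of_subset_quadricSlice_of_sub_eq [Fintype R] (hφ : Function.Surjective φ)
    (ha : LinearIndependent F fun j => φ ∘ a j) {T : Finset (κ → R)}
    (hT : ↑T ⊆ quadricSlice φ a t t₀) (hπ : φ π = 0)
    (hTπ : ∀ x ∈ T, ∀ y ∈ T, ∃ z, x - y = (2 * π) • z) :
    T.card ≤ #{z : R | 2 • z = 0} ^ Fintype.card κ *
      #{z : R | φ z = 0} ^ (Fintype.card κ - 1 - Fintype.card ι) := by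
  classical
  rcases T.eq_empty_or_nonempty with rfl | ⟨u, hu⟩
  · simp
  obtain ⟨b, hb⟩ := exists_basis_sum_extending (linearIndependent_option'.2 ⟨ha, (hT hu).2.2⟩)
  choose e he using fun k => hφ.comp_left (b (.inr k))
  have hφu : ∀ x ∈ T, φ ∘ x = φ ∘ u := fun x hx => comp_eq_comp_of_sub_eq_smul hπ (hTπ x hx u hu)
  let f : (κ → R) → Fin _ → R := fun x k => e k ⬝ᵥ (x - u)
  have hfiber : ∀ c ∈ T.image f, #{x ∈ T | f x = c} ≤ #{z : R | 2 • z = 0} ^ Fintype.card κ := by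
    intro c hc
    obtain ⟨y, hy, rfl⟩ := mem_image.1 hc
    rw [← card_image_of_injective _ (sub_left_injective (b := y))]
    refine card_le_card_pow_of_forall_mem fun d hd i => (mem_filter_univ _).2 ?_
    obtain ⟨x, hx, rfl⟩ := mem_image.1 hd
    obtain ⟨hx, hxy⟩ := mem_filter.1 hx
    obtain ⟨z, hz⟩ := hTπ x hx y hy
    have htorsion := two_smul_sub_eq_zero_of_mem_quadricSlice hπ b
      ((hb none).trans (hφu y hy).symm) (fun j => hb (some j)) (fun k => (he k).symm)
      (hT hx) (hT hy) hz fun k => by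
        have := congrFun hxy k
        simp only [f, dotProduct_sub] at this ⊢
        rw [sub_left_inj.1 this, sub_self]
    rw [two_nsmul, ← two_mul]
    exact congrFun htorsion i
  have himage : (T.image f).card ≤
      #{z : R | φ z = 0} ^ (Fintype.card κ - 1 - Fintype.card ι) := by
    have hdim : Fintype.card κ - 1 - Fintype.card ι =
        Fintype.card (Fin (Module.finrank F (κ → F) - Fintype.card (Option ι))) := by
      rw [Fintype.card_fin, Module.finrank_fintype_fun_eq_card, Fintype.card_option, add_comm,
        Nat.sub_sub]
    rw [hdim]
    refine card_le_card_pow_of_forall_mem fun c hc k => ?_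
    obtain ⟨x, hx, rfl⟩ := mem_image.1 hc
    have hφxu : φ ∘ (x - u) = 0 := by
      rw [← sub_eq_zero.2 (hφu x hx)]
      exact funext fun i => map_sub φ _ _
    rw [mem_filter_univ, RingHom.map_dotProduct, hφxu, dotProduct_zero]
  exact (card_le_mul_card_image _ _ hfiber).trans (Nat.mul_le_mul_left _ himage)

end LocalRing

section ZModPrimePow

variable (p r : ℕ) [NeZero r]

/-- Reduction `ℤ/p^r → ℤ/p`. -/
def modPrime : ZMod (p ^ r) →+* ZMod p :=
  ZMod.castHom (dvd_pow_self p (NeZero.ne r)) (ZMod p)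

lemma modPrime_surjective : Function.Surjective (modPrime p r) :=
  ZMod.ringHom_surjective _

lemma modPrime_prime : modPrime p r p = 0 := by
  rw [map_natCast, CharP.cast_eq_zero]

variable [Fact p.Prime]

instance : IsLocalHom (modPrime p r) where
  map_nonunit z hz := by
    obtain ⟨k, rfl⟩ := ZMod.natCast_zmod_surjective z
    rw [map_natCast, ZMod.isUnit_iff_coprime] at hz
    exact (ZMod.isUnit_iff_coprime _ _).2 (hz.pow_right r)

lemma card_modPrime_eq_zero : #{z | modPrime p r z = 0} = p ^ (r - 1) := by
  have hker : Nat.card (modPrime p r).toAddMonoidHom.ker = #{z | modPrime p r z = 0} := by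
    rw [← Fintype.card_subtype, ← Nat.card_eq_fintype_card]
    rfl
  have hrange : (modPrime p r).toAddMonoidHom.range = ⊤ :=
    AddMonoidHom.range_eq_top.2 (modPrime_surjective p r)
  have hmul := (modPrime p r).toAddMonoidHom.ker.card_mul_index
  rw [AddSubgroup.index_ker, hrange, AddSubgroup.card_top, Nat.card_zmod, Nat.card_zmod, hker]
    at hmul
  exact Nat.eq_of_mul_eq_mul_right (Fact.out : p.Prime).pos
    (hmul.trans (pow_sub_one_mul (NeZero.ne r) p).symm)

variable {p r} {κ ι : Type*}

lemma exists_eq_mul_of_modPrime_eq_zero {z : ZMod (p ^ r)} (hz : modPrime p r z = 0) :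
    ∃ w, z = p * w := by
  obtain ⟨k, rfl⟩ := ZMod.natCast_zmod_surjective z
  rw [map_natCast, ZMod.natCast_eq_zero_iff] at hz
  obtain ⟨w, rfl⟩ := hz
  exact ⟨w, Nat.cast_mul p w⟩

lemma exists_sub_eq_smul_of_modPrime_eq (hp : p ≠ 2) {x y : κ → ZMod (p ^ r)}
    (hxy : modPrime p r ∘ x = modPrime p r ∘ y) :
    ∃ z, x - y = (2 * p : ZMod (p ^ r)) • z := by
  choose z hz using fun i => exists_eq_mul_of_modPrime_eq_zero (z := x i - y i) <| by
    rw [map_sub, sub_eq_zero]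
    exact congrFun hxy i
  have h2 : IsUnit (2 : ZMod (p ^ r)) := (ZMod.isUnit_iff_coprime 2 _).2
    (((Fact.out : p.Prime).odd_of_ne_two hp).pow.coprime_two_left)
  obtain ⟨c, hc⟩ := h2.exists_right_inv
  refine ⟨c • z, funext fun i => ?_⟩
  simp only [Pi.sub_apply, Pi.smul_apply, smul_eq_mul, hz]
  linear_combination (-(p : ZMod (p ^ r)) * z i) * hc

omit [NeZero r] in
lemma exists_sub_eq_smul_of_val_mod_four_eq {x y : κ → ZMod (2 ^ r)}
    (hxy : ∀ i, (x i).val % 4 = (y i).val % 4) :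
    ∃ z, x - y = (2 * (2 : ℕ) : ZMod (2 ^ r)) • z := by
  refine ⟨fun i => ((x i).val / 4 : ℕ) - ((y i).val / 4 : ℕ), funext fun i => ?_⟩
  rw [Pi.sub_apply, ← ZMod.natCast_zmod_val (x i), ← ZMod.natCast_zmod_val (y i),
    ← Nat.div_add_mod (x i).val 4, ← Nat.div_add_mod (y i).val 4, hxy i]
  simp
  ring

variable [Fintype κ] [Fintype ι] {a : ι → κ → ZMod (p ^ r)} {t : ι → ZMod (p ^ r)}
  {t₀ : ZMod (p ^ r)} {T : Finset (κ → ZMod (p ^ r))}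

lemma card_le_mul_card_image_of_subset_quadricSlice {γ : Type*} [DecidableEq γ]
    (ha : LinearIndependent (ZMod p) fun j => modPrime p r ∘ a j)
    (hT : ↑T ⊆ quadricSlice (modPrime p r) a t t₀) (c : (κ → ZMod (p ^ r)) → γ)
    (hc : ∀ x ∈ T, ∀ y ∈ T, c x = c y → ∃ z, x - y = (2 * p : ZMod (p ^ r)) • z) :
    T.card ≤ 2 ^ Fintype.card κ * (p ^ (r - 1)) ^ (Fintype.card κ - 1 - Fintype.card ι) *
      (T.image c).card := by
  refine card_le_mul_card_image _ _ fun b _ => ?_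
  have hfiber := card_le_of_subset_quadricSlice_of_sub_eq (modPrime_surjective p r) ha
    (T := {x ∈ T | c x = b}) (fun x hx => hT (mem_filter.1 hx).1) (modPrime_prime p r)
    fun x hx y hy => hc x (mem_filter.1 hx).1 y (mem_filter.1 hy).1
      ((mem_filter.1 hx).2.trans (mem_filter.1 hy).2.symm)
  rw [card_modPrime_eq_zero] at hfiber
  exact hfiber.trans <| Nat.mul_le_mul_right _ <|
    Nat.pow_le_pow_left (IsAddCyclic.card_nsmul_eq_zero_le two_pos) _

/-- For odd `p` the classes modulo `2 * p` are those modulo `p`, which are counted over the field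
`ZMod p`; for `p = 2` there are at most `4 ^ card κ` of them. -/
lemma card_le_of_subset_quadricSlice
    (ha : LinearIndependent (ZMod p) fun j => modPrime p r ∘ a j)
    (hT : ↑T ⊆ quadricSlice (modPrime p r) a t t₀) :
    T.card ≤ 8 ^ Fintype.card κ * (p ^ r) ^ (Fintype.card κ - 1 - Fintype.card ι) := by
  classical
  set d := Fintype.card κ - 1 - Fintype.card ι
  suffices h : T.card ≤ 2 ^ Fintype.card κ * (p ^ (r - 1)) ^ d * (4 ^ Fintype.card κ * p ^ d) by
    refine h.trans_eq ?_
    rw [← pow_sub_one_mul (NeZero.ne r) p, show 8 = 2 * 4 from rfl, mul_pow, mul_pow]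
    ring
  rcases T.eq_empty_or_nonempty with rfl | ⟨u, hu⟩
  · simp
  by_cases hp : p = 2
  · subst hp
    refine (card_le_mul_card_image_of_subset_quadricSlice ha hT (fun x i => (x i).val % 4)
      fun x _ y _ hxy => exists_sub_eq_smul_of_val_mod_four_eq (congrFun hxy)).trans ?_
    gcongr
    refine (card_le_card_pow_of_forall_mem (s := range 4) fun c hc i => ?_).trans ?_
    · obtain ⟨x, -, rfl⟩ := mem_image.1 hc
      exact mem_range.2 (Nat.mod_lt _ four_pos)
    · rw [card_range]
      exact Nat.le_mul_of_pos_right _ (by positivity)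
  · refine (card_le_mul_card_image_of_subset_quadricSlice ha hT (modPrime p r ∘ ·)
      fun x _ y _ => exists_sub_eq_smul_of_modPrime_eq hp).trans ?_
    gcongr
    have h2 : (2 : ZMod p) ≠ 0 := Ring.two_ne_zero (by rwa [ringChar.eq (ZMod p) p])
    have himage := card_le_of_subset_quadricSlice_id h2 ha (T := T.image (modPrime p r ∘ ·))
      (t := modPrime p r ∘ t) (t₀ := modPrime p r t₀) fun b hb => by
        obtain ⟨x, hx, rfl⟩ := mem_image.1 hb
        exact comp_mem_quadricSlice (hT hx)
    have hκ : Fintype.card κ ≠ 0 := fun h => (hT hu).2.2 <| by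
      have := Fintype.card_eq_zero_iff.1 h
      rw [Subsingleton.elim (modPrime p r ∘ u) 0]
      exact zero_mem _
    rw [ZMod.card] at himage
    exact himage.trans <| Nat.mul_le_mul_right _ <|
      (by norm_num : 2 ≤ 4).trans (Nat.le_self_pow hκ 4)

end ZModPrimePow

section Primitive

variable {R F : Type*} [Semiring R] [Semiring F] {κ ι : Type*}

/-- The matrices over `R` whose columns become linearly independent over `F` under `φ : R →+* F`.
For reduction modulo `p` these are the primitive matrices. -/
def IsPrimitiveMod (φ : R →+* F) (U : Matrix κ ι R) : Prop :=
  LinearIndependent F (U.map φ).col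

variable {p r n : ℕ} [NeZero r] [Fact p.Prime] [Fintype κ]

lemma card_primitive_transpose_mul_self_le (Z : Matrix (Fin n) (Fin n) (ZMod (p ^ r)))
    {S : Finset (Matrix κ (Fin n) (ZMod (p ^ r)))}
    (hS : ∀ U ∈ S, IsPrimitiveMod (modPrime p r) U ∧ Uᵀ * U = Z) :
    S.card ≤ (8 ^ Fintype.card κ) ^ n * (p ^ r) ^ ∑ i : Fin n, (Fintype.card κ - 1 - i) := by
  classical
  have hprod := card_le_prod_of_card_image_le (R := ℕ) (S := S) (e := col)
    (fun U _ V _ h => transpose_injective h)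
    (fun i => 8 ^ Fintype.card κ * (p ^ r) ^ (Fintype.card κ - 1 - i)) fun T hT i hagree => ?_
  · rwa [prod_mul_distrib, prod_const, card_univ, Fintype.card_fin, prod_pow_eq_pow_sum] at hprod
  rcases T.eq_empty_or_nonempty with rfl | ⟨V, hV⟩
  · simp
  have hVprim := (hS V (hT hV)).1
  have hcard : Fintype.card (Set.Iio i) = i := by
    rw [← Set.toFinset_card, Set.toFinset_Iio, Fin.card_Iio]
  rw [← hcard]
  refine card_le_of_subset_quadricSlice (a := fun j : Set.Iio i => V.col j)
    (t := fun j => Z j i) (t₀ := Z i i) (hVprim.comp _ Subtype.val_injective) fun x hx => ?_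
  obtain ⟨U, hU, rfl⟩ := mem_image.1 hx
  obtain ⟨hUprim, hUgram⟩ := hS U (hT hU)
  refine ⟨fun j => ?_, congrFun (congrFun hUgram i) i, fun hspan => ?_⟩
  · change V.col j ⬝ᵥ U.col i = Z j i
    rw [hagree V hV U hU j j.2]
    exact congrFun (congrFun hUgram j) i
  · refine hUprim.notMem_span_image (s := Set.Iio i) (x := i) Set.self_notMem_Iio
      (Submodule.span_mono ?_ hspan)
    rintro _ ⟨j, rfl⟩
    exact ⟨j, j.2, congrArg (modPrime p r ∘ ·) (hagree U hU V hV j j.2)⟩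

end Primitive

section SymmetricCongruence

variable {ι : Type*} [LinearOrder ι]

lemma transpose_mul_mul_apply_of_isUpperTriangular [Fintype ι] {R : Type*} [CommRing R]
    {H D : Matrix ι ι R} (hH : H.IsUpperTriangular) {a b : ι}
    (hD : ∀ c ≤ a, ∀ d ≤ b, (c, d) ≠ (a, b) → D c d = 0) :
    (Hᵀ * D * H) a b = H a a * D a b * H b b := by
  have hzero : ∀ c d, (c, d) ≠ (a, b) → H c a * D c d * H d b = 0 := by
    intro c d hcd
    rcases lt_or_ge a c with hac | hca
    · rw [hH hac, zero_mul, zero_mul]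
    rcases lt_or_ge b d with hbd | hdb
    · rw [hH hbd, mul_zero]
    · rw [hD c hca d hdb hcd, mul_zero, zero_mul]
  simp only [mul_apply, transpose_apply, sum_mul]
  rw [sum_eq_single b, sum_eq_single a]
  · exact fun c _ hc => hzero c b (by simp [hc])
  · simp
  · exact fun d _ hd => sum_eq_zero fun c _ => hzero c d (by simp [hd])
  · simp

lemma card_le_add_card_ge [Fintype ι] (b : ι) :
    #{a | a ≤ b} + #{a | b ≤ a} = Fintype.card ι + 1 := by
  rw [← card_union_add_card_inter, ← filter_or, ← filter_and]
  simp [le_total, ← le_antisymm_iff, filter_eq']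

lemma sum_add_of_le [Fintype ι] (l : ι → ℕ) :
    ∑ x : ι × ι with x.2 ≤ x.1, (l x.1 + l x.2) = (Fintype.card ι + 1) * ∑ i, l i := by
  have hfst : ∑ x : ι × ι with x.2 ≤ x.1, l x.1 = ∑ i, #{a | a ≤ i} * l i := by
    rw [sum_filter, Fintype.sum_prod_type]
    simp [← sum_filter]
  have hsnd : ∑ x : ι × ι with x.2 ≤ x.1, l x.2 = ∑ i, #{a | i ≤ a} * l i := by
    rw [sum_filter, Fintype.sum_prod_type_right]
    simp [← sum_filter]
  rw [sum_add_distrib, hfst, hsnd, ← sum_add_distrib, mul_sum]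
  exact sum_congr rfl fun i _ => by rw [← add_mul, card_le_add_card_ge]

variable {p r : ℕ}

lemma card_le_of_pow_mul_sub_eq_zero [NeZero p] {k : ℕ} {X : Finset (ZMod (p ^ r))}
    (hX : ∀ x ∈ X, ∀ y ∈ X, (p ^ k : ZMod (p ^ r)) * (x - y) = 0) : X.card ≤ p ^ k := by
  rcases X.eq_empty_or_nonempty with rfl | ⟨y, hy⟩
  · simp
  refine le_trans ?_ (IsAddCyclic.card_nsmul_eq_zero_le (α := ZMod (p ^ r))
    (pow_pos (NeZero.pos p) k))
  refine card_le_card_of_injOn (· - y) (fun x hx => ?_) sub_left_injective.injOn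
  simpa using hX x hx y hy

variable [Fintype ι] {l : ι → ℕ} {H : Matrix ι ι ℤ}

lemma IsPowTriangular.pow_mul_sub_eq_zero (hH : IsPowTriangular p l H) {R : Type*} [CommRing R]
    {Z Z' : Matrix ι ι R} (hZ : Z.IsSymm) (hZ' : Z'.IsSymm)
    (h : (H.map (Int.castRingHom R))ᵀ * Z * H.map (Int.castRingHom R) =
      (H.map (Int.castRingHom R))ᵀ * Z' * H.map (Int.castRingHom R)) {a b : ι} (hab : a ≤ b)
    (hagree : ∀ c d, c ≤ d → toLex (d, c) < toLex (b, a) → Z c d = Z' c d) :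
    (p : R) ^ (l b + l a) * (Z a b - Z' a b) = 0 := by
  have hupper : (H.map (Int.castRingHom R)).IsUpperTriangular := hH.upper.map _
  have hdiag : ∀ i, H.map (Int.castRingHom R) i i = (p : R) ^ l i := fun i => by
    simp [hH.diag]
  have hzero := transpose_mul_mul_apply_of_isUpperTriangular hupper (D := Z - Z') (a := a) (b := b)
    fun c hca d hdb hne => by
      rw [Matrix.sub_apply, sub_eq_zero]
      rcases le_or_gt c d with hcd | hdc
      · refine hagree c d hcd (Prod.Lex.toLex_lt_toLex.2 ?_)
        rcases hdb.lt_or_eq with hdb | rfl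
        · exact .inl hdb
        · exact .inr ⟨rfl, hca.lt_of_ne fun hc => hne (by rw [hc])⟩
      · rw [← hZ.apply, ← hZ'.apply]
        refine hagree d c hdc.le (Prod.Lex.toLex_lt_toLex.2 ?_)
        rcases (hca.trans hab).lt_or_eq with hcb | hcb
        · exact .inl hcb
        · exact .inr ⟨hcb, hdc.trans_le hca⟩
  rw [mul_sub, sub_mul, h, sub_self, Matrix.zero_apply, hdiag, hdiag, Matrix.sub_apply] at hzero
  rw [pow_add]
  linear_combination -hzero

/-- The entries `Z a b` with `a ≤ b` are exposed in lexicographic order of `(b, a)`: each of them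
is determined modulo the annihilator of `p ^ (l b + l a)` by the preceding ones. -/
lemma card_isSymm_transpose_mul_mul_eq_le [NeZero p] (hH : IsPowTriangular p l H)
    {Λ : Matrix ι ι (ZMod (p ^ r))} {S : Finset (Matrix ι ι (ZMod (p ^ r)))}
    (hS : ∀ Z ∈ S, Z.IsSymm ∧ (H.map (Int.castRingHom _))ᵀ * Z * H.map (Int.castRingHom _) = Λ) :
    S.card ≤ p ^ ((Fintype.card ι + 1) * ∑ i, l i) := by
  let J := {x : ι ×ₗ ι // (ofLex x).2 ≤ (ofLex x).1}
  let e (Z : Matrix ι ι (ZMod (p ^ r))) (x : J) : ZMod (p ^ r) := Z (ofLex x.1).2 (ofLex x.1).1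
  have he : Set.InjOn e S := fun Z hZ Z' hZ' h => by
    have hle : ∀ a b, a ≤ b → Z a b = Z' a b := fun a b hab => congrFun h ⟨toLex (b, a), hab⟩
    ext a b
    rcases le_total a b with hab | hba
    · exact hle a b hab
    · rw [← (hS Z hZ).1.apply, ← (hS Z' hZ').1.apply, hle b a hba]
  have hcard := card_le_prod_of_card_image_le (R := ℕ) he
    (fun x => p ^ (l (ofLex x.1).1 + l (ofLex x.1).2)) ?_
  · refine hcard.trans_eq ?_
    rw [prod_pow_eq_pow_sum, ← sum_add_of_le]
    exact congrArg _ (sum_subtype _ (fun _ => mem_filter_univ _) fun x : ι × ι =>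
      l x.1 + l x.2).symm
  rintro T hT ⟨x, hab⟩ hagree
  refine card_le_of_pow_mul_sub_eq_zero fun y hy y' hy' => ?_
  obtain ⟨Z, hZ, rfl⟩ := mem_image.1 hy
  obtain ⟨Z', hZ', rfl⟩ := mem_image.1 hy'
  obtain ⟨hZsymm, hZΛ⟩ := hS Z (hT hZ)
  obtain ⟨hZ'symm, hZ'Λ⟩ := hS Z' (hT hZ')
  exact hH.pow_mul_sub_eq_zero hZsymm hZ'symm (hZΛ.trans hZ'Λ.symm) hab fun c d hcd hlt =>
    hagree Z hZ Z' hZ' ⟨toLex (d, c), hcd⟩ hlt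

end SymmetricCongruence

section MatrixKernel

variable {κ ι : Type*} [Fintype κ] [Fintype ι]

variable {R : Type*} [Fintype R] [DecidableEq R] [Ring R] [DecidableEq κ] [DecidableEq ι]

lemma card_mul_eq_zero (B : Matrix ι ι R) :
    #{W : Matrix κ ι R | W * B = 0} = #{x : ι → R | x ᵥ* B = 0} ^ Fintype.card κ := by
  rw [← card_univ, ← prod_const, ← Fintype.card_piFinset]
  refine congrArg card (Finset.ext fun W => ?_)
  refine (mem_filter_univ W).trans (Iff.trans ?_ Fintype.mem_piFinset.symm)
  simp only [mem_filter_univ]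
  exact ⟨fun h i => congrFun h i, funext⟩

lemma card_mul_eq_zero_mul_card_image_mul_le {B : Matrix ι ι R} {P : Finset (Matrix κ ι R)}
    (hP : ∀ U ∈ P, ∀ W : Matrix κ ι R, W * B = 0 → U + W ∈ P) :
    #{W : Matrix κ ι R | W * B = 0} * (P.image fun U : Matrix κ ι R => U * B).card ≤ P.card := by
  refine mul_card_image_le_card _ _ fun L hL => ?_
  obtain ⟨U, hU, rfl⟩ := mem_image.1 hL
  refine card_le_card_of_injOn (U + ·) (fun W hW => ?_) (add_right_injective U).injOn
  rw [mem_coe, mem_filter_univ] at hW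
  exact mem_filter.2 ⟨hP U hU W hW, by rw [Matrix.add_mul, hW, add_zero]⟩

end MatrixKernel

section PrimitiveFactorization

variable {κ ι : Type*} [Fintype κ] [Fintype ι] {p r : ℕ} [NeZero r] [Fact p.Prime]

lemma modPrime_eq_zero_of_pow_mul_eq_zero {k : ℕ} (hk : k < r) {z : ZMod (p ^ r)}
    (hz : (p : ZMod (p ^ r)) ^ k * z = 0) : modPrime p r z = 0 := by
  obtain ⟨w, rfl⟩ := ZMod.natCast_zmod_surjective z
  rw [map_natCast, ZMod.natCast_eq_zero_iff]
  have hdvd : p ^ k * p ∣ p ^ k * w := (pow_dvd_pow p hk).trans <| by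
    rw [← ZMod.natCast_eq_zero_iff]
    exact_mod_cast hz
  exact Nat.dvd_of_mul_dvd_mul_left (pow_pos (Fact.out : p.Prime).pos k) hdvd

variable [LinearOrder ι] {l : ι → ℕ} {H : Matrix ι ι ℤ}

omit [Fintype κ] in
lemma IsPowTriangular.map_modPrime_eq_zero (hH : IsPowTriangular p l H) (hl : ∑ i, l i < r)
    {W : Matrix κ ι (ZMod (p ^ r))} (hW : W * H.map (Int.castRingHom (ZMod (p ^ r))) = 0) :
    W.map (modPrime p r) = 0 := by
  have hdet : (H.map (Int.castRingHom (ZMod (p ^ r)))).det = (p : ZMod (p ^ r)) ^ ∑ i, l i := by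
    rw [← RingHom.mapMatrix_apply, ← RingHom.map_det, hH.det_eq]
    simp
  have hsmul : (p : ZMod (p ^ r)) ^ (∑ i, l i) • W = 0 := by
    rw [← hdet, ← Matrix.mul_one W, ← Matrix.mul_smul, ← mul_adjugate, ← Matrix.mul_assoc, hW,
      Matrix.zero_mul]
  ext i j
  exact modPrime_eq_zero_of_pow_mul_eq_zero hl (congrFun (congrFun hsmul i) j)

omit [NeZero r] in
lemma IsPowTriangular.card_mul_eq_zero [DecidableEq κ] (hH : IsPowTriangular p l H)
    (hl : ∑ i, l i < r) :
    #{W : Matrix κ ι (ZMod (p ^ r)) | W * H.map (Int.castRingHom (ZMod (p ^ r))) = 0} =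
      p ^ (Fintype.card κ * ∑ i, l i) := by
  have hdet : H.det ∣ (p ^ r : ℕ) := by
    rw [hH.det_eq, Nat.cast_pow]
    exact pow_dvd_pow _ hl.le
  rw [_root_.card_mul_eq_zero, card_vecMul_eq_zero_of_det_dvd hdet, hH.det_eq, Int.natAbs_pow,
    Int.natAbs_natCast, ← pow_mul, mul_comm]

lemma card_primitive_le_of_transpose_mul_mul_eq {n : ℕ} {l : Fin n → ℕ}
    {H : Matrix (Fin n) (Fin n) ℤ} (hH : IsPowTriangular p l H)
    {Λ : Matrix (Fin n) (Fin n) (ZMod (p ^ r))} {P : Finset (Matrix κ (Fin n) (ZMod (p ^ r)))}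
    (hP : ∀ U ∈ P, IsPrimitiveMod (modPrime p r) U ∧
      (U * H.map (Int.castRingHom (ZMod (p ^ r))))ᵀ *
        (U * H.map (Int.castRingHom (ZMod (p ^ r)))) = Λ) :
    P.card ≤ (8 ^ Fintype.card κ) ^ n * (p ^ r) ^ (∑ i : Fin n, (Fintype.card κ - 1 - i)) *
      p ^ ((n + 1) * ∑ i, l i) := by
  have hfiber := card_le_mul_card_image (f := fun U => Uᵀ * U) P _ fun Z _ =>
    card_primitive_transpose_mul_self_le Z (S := {U ∈ P | Uᵀ * U = Z}) fun U hU =>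
      ⟨(hP U (mem_filter.1 hU).1).1, (mem_filter.1 hU).2⟩
  refine hfiber.trans (Nat.mul_le_mul_left _ ?_)
  have hsymm := card_isSymm_transpose_mul_mul_eq_le hH (Λ := Λ) (S := P.image fun U => Uᵀ * U) ?_
  · rwa [Fintype.card_fin] at hsymm
  intro Z hZ
  obtain ⟨U, hU, rfl⟩ := mem_image.1 hZ
  refine ⟨by rw [IsSymm, transpose_mul, transpose_transpose], ?_⟩
  rw [← (hP U hU).2, transpose_mul]
  simp only [Matrix.mul_assoc]

lemma card_primitive_mul_le {n : ℕ} {l : Fin n → ℕ} {H : Matrix (Fin n) (Fin n) ℤ}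
    (hH : IsPowTriangular p l H) (hl : ∑ i, l i < r) {Λ : Matrix (Fin n) (Fin n) (ZMod (p ^ r))}
    {S : Finset (Matrix (Fin (n + 1)) (Fin n) (ZMod (p ^ r)))}
    (hS : ∀ L ∈ S, Lᵀ * L = Λ ∧
      ∃ U, IsPrimitiveMod (modPrime p r) U ∧ U * H.map (Int.castRingHom _) = L) :
    S.card ≤ (8 ^ (n + 1)) ^ n * (p ^ r) ^ ∑ i : Fin n, (n - i) := by
  classical
  set B := H.map (Int.castRingHom (ZMod (p ^ r)))
  let P : Finset (Matrix (Fin (n + 1)) (Fin n) (ZMod (p ^ r))) :=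
    {U | IsPrimitiveMod (modPrime p r) U ∧ (U * B)ᵀ * (U * B) = Λ}
  have hSP : S ⊆ P.image fun U : Matrix (Fin (n + 1)) (Fin n) (ZMod (p ^ r)) => U * B := by
    intro L hL
    obtain ⟨hgram, U, hU, rfl⟩ := hS L hL
    exact mem_image.2 ⟨U, (mem_filter_univ U).2 ⟨hU, hgram⟩, rfl⟩
  have hPW : ∀ U ∈ P, ∀ W : Matrix (Fin (n + 1)) (Fin n) (ZMod (p ^ r)),
      W * B = 0 → U + W ∈ P := fun U hU W hW => by
    obtain ⟨hprim, hgram⟩ := (mem_filter_univ U).1 hU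
    refine (mem_filter_univ _).2 ⟨?_, by rwa [Matrix.add_mul, hW, add_zero]⟩
    rwa [IsPrimitiveMod, Matrix.map_add _ (map_add _), hH.map_modPrime_eq_zero hl hW, add_zero]
  have hlower := card_mul_eq_zero_mul_card_image_mul_le hPW
  have hupper := card_primitive_le_of_transpose_mul_mul_eq hH (Λ := Λ) (P := P) fun U hU =>
    (mem_filter_univ U).1 hU
  rw [hH.card_mul_eq_zero hl, Fintype.card_fin] at hlower
  rw [Fintype.card_fin] at hupper
  refine Nat.le_of_mul_le_mul_left ?_ (pow_pos (Fact.out : p.Prime).pos ((n + 1) * ∑ i, l i))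
  rw [mul_comm _ ((8 ^ (n + 1)) ^ n * _)]
  exact (Nat.mul_le_mul_left _ (card_le_card hSP)).trans (hlower.trans hupper)

end PrimitiveFactorization

section Factorization

lemma updateCol_mulVec_apply {R κ ι : Type*} [NonUnitalNonAssocRing R] [Fintype ι]
    [DecidableEq ι] (U : Matrix κ ι R) (i : ι) (u : κ → R) (w : ι → R) (x : κ) :
    (U.updateCol i u *ᵥ w) x = (U *ᵥ w) x + (u x - U x i) * w i := by
  rw [← sub_eq_iff_eq_add', mulVec, mulVec, dotProduct, dotProduct, ← sum_sub_distrib,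
    sum_eq_single i]
  · rw [updateCol_self, sub_mul]
  · intro k _ hk
    rw [updateCol_ne hk, sub_self]
  · simp

variable {ι : Type*} [LinearOrder ι] {p : ℕ}

lemma isPowTriangular_one (p : ℕ) : IsPowTriangular p 0 (1 : Matrix ι ι ℤ) where
  upper := blockTriangular_one
  diag i := by rw [one_apply_eq, Pi.zero_apply, pow_zero]

variable [Fintype ι]

section NeZero

variable [NeZero p] {l : ι → ℕ} {H : Matrix ι ι ℤ}

lemma IsPowTriangular.exists_mul_eq_reduced_col (hH : IsPowTriangular p l H) (c : ι) :
    ∃ V H', IsPowTriangular p l H' ∧ V * H' = H ∧ (∀ j < c, H'.col j = H.col j) ∧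
      ∀ i < c, 0 ≤ H' i c ∧ H' i c < (p : ℤ) ^ l c := by
  let q : ι → ℤ := fun i => if i < c then H i c / (p : ℤ) ^ l c else 0
  have hq : ∀ i, ¬ i < c → q i = 0 := fun i hi => if_neg hi
  set N : Matrix ι ι ℤ := vecMulVec q (Pi.single c 1)
  have hNN : N * N = 0 := by
    rw [vecMulVec_mul_vecMulVec, single_dotProduct, hq c (lt_irrefl c), mul_zero, zero_smul,
      vecMulVec_zero]
  have hN : ∀ i j, j ≤ i → N i j = 0 := fun i j hji => by
    change q i * (Pi.single c 1 : ι → ℤ) j = 0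
    rcases eq_or_ne j c with rfl | hjc
    · rw [hq i hji.not_gt, zero_mul]
    · rw [Pi.single_eq_of_ne hjc, mul_zero]
  have hNH : ∀ i j, ((1 - N) * H) i j = H i j - q i * H c j := fun i j => by
    rw [Matrix.sub_mul, Matrix.one_mul, Matrix.sub_apply, vecMulVec_mul, vecMulVec_apply,
      single_one_vecMul, row_apply]
  have hunip : IsPowTriangular p 0 (1 - N) := by
    refine ⟨fun i j hji => ?_, fun i => ?_⟩
    · have hji' : j < i := hji
      rw [Matrix.sub_apply, one_apply_ne hji'.ne', hN i j hji'.le, sub_zero]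
    · rw [Matrix.sub_apply, one_apply_eq, hN i i le_rfl, sub_zero, Pi.zero_apply, pow_zero]
  refine ⟨1 + N, (1 - N) * H, zero_add l ▸ hunip.mul hH, ?_, fun j hj => funext fun i => ?_,
    fun i hi => ?_⟩
  · rw [← Matrix.mul_assoc, Matrix.add_mul, Matrix.mul_sub, Matrix.mul_sub, hNN]
    simp
  · exact (hNH i j).trans (by rw [hH.upper hj, mul_zero, sub_zero]; rfl)
  · have hpos : (0 : ℤ) < (p : ℤ) ^ l c := pow_pos (Nat.cast_pos.2 (NeZero.pos p)) _
    have hemod : ((1 - N) * H) i c = H i c % (p : ℤ) ^ l c := by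
      have hqi : q i = H i c / (p : ℤ) ^ l c := if_pos hi
      rw [hNH, hH.diag, hqi, mul_comm, Int.emod_def]
    rw [hemod]
    exact ⟨Int.emod_nonneg _ hpos.ne', Int.emod_lt_of_pos _ hpos⟩

lemma IsPowTriangular.exists_mul_eq_isHermiteForm (hH : IsPowTriangular p l H) :
    ∃ V H', IsHermiteForm p l H' ∧ V * H' = H := by
  suffices h : ∀ s : Finset ι, ∃ V H', IsPowTriangular p l H' ∧ V * H' = H ∧
      ∀ j ∈ s, ∀ i < j, 0 ≤ H' i j ∧ H' i j < (p : ℤ) ^ l j by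
    obtain ⟨V, H', hH', hV, hred⟩ := h univ
    exact ⟨V, H', ⟨hH', fun i j hij => (hred j (mem_univ j) i hij).1,
      fun i j hij => (hred j (mem_univ j) i hij).2⟩, hV⟩
  intro s
  induction s using Finset.induction_on_max with
  | empty => exact ⟨1, H, hH, Matrix.one_mul H, by simp⟩
  | insert c s hc ih =>
    obtain ⟨V, H', hH', rfl, hred⟩ := ih
    obtain ⟨W, H'', hH'', rfl, hcol, hred_c⟩ := hH'.exists_mul_eq_reduced_col c
    refine ⟨V * W, H'', hH'', Matrix.mul_assoc V W H'', fun j hj i hij => ?_⟩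
    rcases mem_insert.1 hj with rfl | hjs
    · exact hred_c i hij
    · have hentry : H'' i j = (W * H'') i j := congrFun (hcol j (hc j hjs)) i
      rw [hentry]
      exact hred j hjs i hij

end NeZero

variable {κ : Type*} [Fact p.Prime]

lemma exists_dvd_mulVec_of_not_isPrimitiveMod {U : Matrix κ ι ℤ}
    (hU : ¬ IsPrimitiveMod (Int.castRingHom (ZMod p)) U) :
    ∃ (i : ι) (b : ι → ℤ), b i = 1 ∧ (∀ k, i < k → b k = 0) ∧ ∀ x, (p : ℤ) ∣ (U *ᵥ b) x := by
  classical
  obtain ⟨a, ha, i₀, hi₀⟩ := Fintype.not_linearIndependent_iff.1 hU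
  have hne : (univ.filter (a · ≠ 0)).Nonempty := ⟨i₀, (mem_filter_univ i₀).2 hi₀⟩
  obtain ⟨i, hi, hmax⟩ := exists_max_image _ id hne
  rw [mem_filter_univ] at hi
  have : Fact (1 < p) := ⟨(Fact.out : p.Prime).one_lt⟩
  refine ⟨i, fun k => ((a i)⁻¹ * a k).val, ?_, fun k hk => ?_, fun x => ?_⟩
  · beta_reduce
    rw [inv_mul_cancel₀ hi, ZMod.val_one, Nat.cast_one]
  · have hak : a k = 0 := by
      by_contra hak
      exact hk.not_ge (hmax k ((mem_filter_univ k).2 hak))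
    beta_reduce
    rw [hak, mul_zero, ZMod.val_zero, Nat.cast_zero]
  · have hax := congrFun ha x
    rw [Finset.sum_apply] at hax
    rw [← ZMod.intCast_zmod_eq_zero_iff_dvd]
    calc ((U *ᵥ fun k => (((a i)⁻¹ * a k).val : ℤ)) x : ZMod p)
        = ∑ k, (a i)⁻¹ * (a k * U x k) := by
          rw [mulVec, dotProduct, Int.cast_sum]
          refine sum_congr rfl fun k _ => ?_
          rw [Int.cast_mul, Int.cast_natCast, ZMod.natCast_zmod_val]
          ring
      _ = 0 := by
          rw [← mul_sum]
          exact mul_eq_zero_of_right _ hax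

lemma exists_mul_eq_of_not_isPrimitiveMod {U : Matrix κ ι ℤ}
    (hU : ¬ IsPrimitiveMod (Int.castRingHom (ZMod p)) U) :
    ∃ (i : ι) (U' : Matrix κ ι ℤ) (E : Matrix ι ι ℤ),
      IsPowTriangular p (Pi.single i 1) E ∧ U' * E = U := by
  obtain ⟨i, b, hbi, hb, hdvd⟩ := exists_dvd_mulVec_of_not_isPrimitiveMod hU
  choose u hu using hdvd
  refine ⟨i, U.updateCol i u, (1 : Matrix ι ι ℤ).updateCol i (Pi.single i ((p : ℤ) + 1) - b),
    ⟨fun k j hjk => ?_, fun j => ?_⟩, ?_⟩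
  · have hjk' : j < k := hjk
    rcases eq_or_ne j i with rfl | hj
    · rw [updateCol_self, Pi.sub_apply, Pi.single_eq_of_ne hjk'.ne', hb k hjk', sub_zero]
    · rw [updateCol_ne hj, one_apply_ne hjk'.ne']
  · rcases eq_or_ne j i with rfl | hj
    · rw [updateCol_self, Pi.sub_apply, Pi.single_eq_same, Pi.single_eq_same, hbi]
      ring
    · rw [updateCol_ne hj, one_apply_eq, Pi.single_eq_of_ne hj, pow_zero]
  · rw [mul_updateCol, Matrix.mul_one, updateCol_idem]
    convert updateCol_eq_self U i using 2
    ext x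
    have hb_mul := updateCol_mulVec_apply U i u b x
    rw [hu, hbi] at hb_mul
    rw [mulVec_sub, Pi.sub_apply, hb_mul, mulVec_single, Pi.smul_apply, col_apply, updateCol_self,
      op_smul_eq_mul]
    ring

lemma exists_isPrimitiveMod_mul_isHermiteForm [Fintype κ] {L : Matrix κ ι ℤ}
    (hL : (Lᵀ * L).det ≠ 0) :
    ∃ (l : ι → ℕ) (U : Matrix κ ι ℤ) (H : Matrix ι ι ℤ), IsHermiteForm p l H ∧
      IsPrimitiveMod (Int.castRingHom (ZMod p)) U ∧ U * H = L := by
  let s : Set ℕ := {k | ∃ (l : ι → ℕ) (U : Matrix κ ι ℤ) (H : Matrix ι ι ℤ),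
    IsPowTriangular p l H ∧ U * H = L ∧ ∑ i, l i = k}
  have hbdd : BddAbove s := by
    refine ⟨(Lᵀ * L).det.natAbs, ?_⟩
    rintro _ ⟨l, U, H, hH, rfl, rfl⟩
    have hdvd : p ^ ∑ i, l i ∣ ((U * H)ᵀ * (U * H)).det.natAbs := by
      rw [← Int.natCast_dvd, Nat.cast_pow, ← hH.det_eq, ← Matrix.mul_assoc, det_mul]
      exact dvd_mul_left _ _
    exact (Nat.lt_pow_self (Fact.out : p.Prime).one_lt).le.trans
      (Nat.le_of_dvd (Int.natAbs_pos.2 hL) hdvd)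
  have hne : s.Nonempty := ⟨_, 0, L, 1, isPowTriangular_one p, Matrix.mul_one L, rfl⟩
  obtain ⟨l, U, H₀, hH₀, rfl, hmax⟩ := Nat.sSup_mem hne hbdd
  obtain ⟨V, H, hH, rfl⟩ := hH₀.exists_mul_eq_isHermiteForm
  refine ⟨l, U * V, H, hH, ?_, Matrix.mul_assoc U V H⟩
  by_contra hUV
  obtain ⟨i, U', E, hE, hU'⟩ := exists_mul_eq_of_not_isPrimitiveMod hUV
  have hmem : 1 + ∑ j, l j ∈ s := by
    refine ⟨_, U', E * H, hE.mul hH.toIsPowTriangular, ?_, ?_⟩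
    · rw [← Matrix.mul_assoc, hU', Matrix.mul_assoc]
    · simp [sum_add_distrib]
  have := le_csSup hbdd hmem
  omega

end Factorization

section GramLift

lemma exists_mul_eq_of_det_dvd {R ι γ : Type*} [CommRing R] [Fintype ι] [DecidableEq ι]
    {A : Matrix ι ι R} {B : Matrix ι γ R} (h : ∀ i j, A.det ∣ B i j) :
    ∃ Y : Matrix ι γ R, A * Y = B := by
  choose C hC using h
  refine ⟨A.adjugate * of C, ?_⟩
  rw [← Matrix.mul_assoc, mul_adjugate, Matrix.smul_mul, Matrix.one_mul]
  ext i j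
  exact (hC i j).symm

variable {p r : ℕ} [Fact p.Prime]

lemma le_factorization_of_pow_dvd_of_pow_dvd_sub {a b : ℤ} (ha : a ≠ 0)
    (hr : a.natAbs.factorization p < r) (hab : (p : ℤ) ^ r ∣ a - b) {k : ℕ}
    (hb : (p : ℤ) ^ k ∣ b) : k ≤ a.natAbs.factorization p := by
  have hdvd_iff : ∀ m, (p : ℤ) ^ m ∣ a ↔ m ≤ a.natAbs.factorization p := fun m => by
    rw [← Nat.cast_pow, Int.natCast_dvd,
      (Fact.out : p.Prime).pow_dvd_iff_le_factorization (Int.natAbs_ne_zero.2 ha)]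
  have hmin := (dvd_iff_dvd_of_dvd_sub ((pow_dvd_pow _ (min_le_left r k)).trans hab)).2
    ((pow_dvd_pow _ (min_le_right r k)).trans hb)
  exact ((min_le_iff.1 ((hdvd_iff _).1 hmin)).resolve_left hr.not_ge)

variable {κ : Type*} [Fintype κ] {n : ℕ} {Λ : Matrix (Fin n) (Fin n) ℤ}

lemma exists_hermiteDivisors_isPrimitiveMod_mul (hΛ : Λ.det ≠ 0)
    (hr : Λ.det.natAbs.factorization p < r) {L : Matrix κ (Fin n) ℤ}
    (hL : (Lᵀ * L).map (Int.castRingHom (ZMod (p ^ r))) = Λ.map (Int.castRingHom _)) :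
    ∃ l, ∑ i, l i ≤ Λ.det.natAbs.factorization p ∧ ∃ H ∈ hermiteDivisors p Λ l,
      ∃ U : Matrix κ (Fin n) ℤ, IsPrimitiveMod (Int.castRingHom (ZMod p)) U ∧ U * H = L := by
  have hentry : ∀ i j, (p : ℤ) ^ r ∣ Λ i j - (Lᵀ * L) i j := fun i j => by
    rw [← Nat.cast_pow, ← ZMod.intCast_zmod_eq_zero_iff_dvd, Int.cast_sub, sub_eq_zero]
    exact (congrFun (congrFun hL i) j).symm
  have hdet : (p : ℤ) ^ r ∣ Λ.det - (Lᵀ * L).det := by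
    rw [← Nat.cast_pow, ← ZMod.intCast_zmod_eq_zero_iff_dvd, Int.cast_sub, Int.cast_det,
      Int.cast_det, sub_eq_zero]
    exact congrArg det hL.symm
  have hgram : (Lᵀ * L).det ≠ 0 := fun h0 => hr.not_ge <|
    le_factorization_of_pow_dvd_of_pow_dvd_sub hΛ hr hdet (h0 ▸ dvd_zero _)
  obtain ⟨l, U, H, hH, hU, rfl⟩ := exists_isPrimitiveMod_mul_isHermiteForm (p := p) hgram
  have hsum : ∑ i, l i ≤ Λ.det.natAbs.factorization p := by
    refine le_factorization_of_pow_dvd_of_pow_dvd_sub hΛ hr hdet ?_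
    rw [transpose_mul, Matrix.mul_assoc, det_mul, det_transpose, hH.det_eq]
    exact dvd_mul_right _ _
  obtain ⟨Y, hY⟩ := exists_mul_eq_of_det_dvd (A := Hᵀ) (B := Λ - (U * H)ᵀ * (U * H)) fun i j => by
    rw [det_transpose, hH.det_eq]
    exact (pow_dvd_pow _ (hsum.trans hr.le)).trans (hentry i j)
  refine ⟨l, hsum, H, ⟨hH, Uᵀ * (U * H) + Y, ?_⟩, U, hU, rfl⟩
  rw [Matrix.mul_add, hY, ← Matrix.mul_assoc, ← transpose_mul, add_sub_cancel]

lemma exists_hermiteDivisors_isPrimitiveMod_mul_map [NeZero r] (hΛ : Λ.det ≠ 0)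
    (hr : Λ.det.natAbs.factorization p < r) {L : Matrix κ (Fin n) (ZMod (p ^ r))}
    (hL : Lᵀ * L = Λ.map (Int.castRingHom (ZMod (p ^ r)))) :
    ∃ l, ∑ i, l i ≤ Λ.det.natAbs.factorization p ∧ ∃ H ∈ hermiteDivisors p Λ l,
      ∃ U, IsPrimitiveMod (modPrime p r) U ∧ U * H.map (Int.castRingHom (ZMod (p ^ r))) = L := by
  obtain ⟨M, rfl⟩ : ∃ M : Matrix κ (Fin n) ℤ, M.map (Int.castRingHom (ZMod (p ^ r))) = L := by
    choose M hM using fun i j => ZMod.intCast_surjective (L i j)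
    exact ⟨of M, ext hM⟩
  rw [← transpose_map, ← Matrix.map_mul] at hL
  obtain ⟨l, hl, H, hH, U, hU, rfl⟩ := exists_hermiteDivisors_isPrimitiveMod_mul hΛ hr hL
  refine ⟨l, hl, H, hH, U.map (Int.castRingHom (ZMod (p ^ r))), ?_, Matrix.map_mul.symm⟩
  rwa [IsPrimitiveMod, Matrix.map_map, ← RingHom.coe_comp,
    RingHom.ext_int ((modPrime p r).comp _) (Int.castRingHom (ZMod p))]

end GramLift

section FiniteLevel

variable {p n : ℕ} {Λ : Matrix (Fin n) (Fin n) ℤ}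

/-- The exponent tuples `l` with `l₁ + ⋯ + l_n ≤ v`. -/
def boundedTuples (n v : ℕ) : Finset (Fin n → ℕ) :=
  {l ∈ Fintype.piFinset fun _ : Fin n => range (v + 1) | ∑ i, l i ≤ v}

lemma mem_boundedTuples {v : ℕ} {l : Fin n → ℕ} :
    l ∈ boundedTuples n v ↔ ∑ i, l i ≤ v := by
  refine mem_filter.trans (and_iff_right_of_imp fun h => Fintype.mem_piFinset.2 fun i => ?_)
  exact mem_range_succ_iff.2 ((single_le_sum (fun _ _ => zero_le) (mem_univ i)).trans h)

lemma sum_fin_sub_eq (n : ℕ) : ∑ i : Fin n, (n - i) = (n + 1) * n - n * (n + 1) / 2 := by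
  have hgauss := sum_range_id_mul_two (n + 1)
  rw [sum_range_succ', Nat.add_sub_cancel, add_zero, mul_comm (n + 1)] at hgauss
  have hreflect : ∑ i ∈ range n, (n - i) = ∑ i ∈ range n, (i + 1) := by
    rw [← sum_range_reflect]
    exact sum_congr rfl fun i hi => by have := mem_range.1 hi; omega
  rw [Fin.sum_univ_eq_sum_range (fun i => n - i), hreflect, mul_comm (n + 1)]
  omega

lemma card_transpose_mul_self_eq_le [Fact p.Prime] (hΛ : Λ.det ≠ 0) {r : ℕ}
    (hr : Λ.det.natAbs.factorization p < r) :
    #{L : Matrix (Fin (n + 1)) (Fin n) (ZMod (p ^ r)) |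
        Lᵀ * L = Λ.map (Int.castRingHom (ZMod (p ^ r)))} ≤
      (8 ^ (n + 1)) ^ n * (p ^ r) ^ (∑ i : Fin n, (n - i)) *
        ∑ l ∈ boundedTuples n (Λ.det.natAbs.factorization p), (hermiteDivisors p Λ l).ncard := by
  classical
  have : NeZero r := ⟨hr.ne_bot⟩
  set v := Λ.det.natAbs.factorization p
  set T : Finset (Matrix (Fin (n + 1)) (Fin n) (ZMod (p ^ r))) :=
    {L | Lᵀ * L = Λ.map (Int.castRingHom (ZMod (p ^ r)))}
  let D (l : Fin n → ℕ) := (finite_hermiteDivisors p Λ l).toFinset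
  let S (H : Matrix (Fin n) (Fin n) ℤ) :=
    {L ∈ T | ∃ U, IsPrimitiveMod (modPrime p r) U ∧ U * H.map (Int.castRingHom _) = L}
  have hcover : T ⊆ (boundedTuples n v).biUnion fun l => (D l).biUnion S := by
    intro L hL
    obtain ⟨l, hl, H, hH, hU⟩ :=
      exists_hermiteDivisors_isPrimitiveMod_mul_map hΛ hr ((mem_filter_univ L).1 hL)
    exact mem_biUnion.2 ⟨l, mem_boundedTuples.2 hl,
      mem_biUnion.2 ⟨H, (Set.Finite.mem_toFinset _).2 hH, mem_filter.2 ⟨hL, hU⟩⟩⟩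
  refine (card_le_card hcover).trans (card_biUnion_le.trans ?_)
  rw [mul_sum]
  refine sum_le_sum fun l hl => ?_
  rw [mul_comm, Set.ncard_eq_toFinset_card _ (finite_hermiteDivisors p Λ l)]
  refine card_biUnion_le_card_mul _ _ _ fun H hH => ?_
  exact card_primitive_mul_le ((Set.Finite.mem_toFinset _).1 hH).1.toIsPowTriangular
    ((mem_boundedTuples.1 hl).trans_lt hr) fun L hL =>
      ⟨(mem_filter_univ L).1 (mem_filter.1 hL).1, (mem_filter.1 hL).2⟩

end FiniteLevel

lemma det_ne_zero_of_posDef {R ι : Type*} [CommRing R] [IsDomain R] [PartialOrder R] [StarRing R]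
    [Fintype ι] [DecidableEq ι] {A : Matrix ι ι R} (hA : A.PosDef) : A.det ≠ 0 := by
  intro h
  obtain ⟨x, hx, hAx⟩ := exists_mulVec_eq_zero_iff.2 h
  have hpos := hA.dotProduct_mulVec_pos hx
  rw [hAx, dotProduct_zero] at hpos
  exact hpos.false

theorem nu_bound_divisor_general {p n : ℕ} (hp : p.Prime) {Λ : Matrix (Fin n) (Fin n) ℤ}
    (hΛ : Λ.det ≠ 0) :
    nuId p n Λ ≤ (8 ^ (n + 1)) ^ n * ∑ l ∈ boundedTuples n (Λ.det.natAbs.factorization p),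
      epow p (∑ i ∈ Icc 2 n, betaExp p n Λ l i) := by
  have : Fact p.Prime := ⟨hp⟩
  refine Filter.limsup_le_of_le (by isBoundedDefault) ?_
  filter_upwards [Filter.eventually_gt_atTop (Λ.det.natAbs.factorization p)] with r hr
  have hcard := card_transpose_mul_self_eq_le hΛ hr
  rw [sum_fin_sub_eq, ← pow_mul p] at hcard
  refine ENNReal.div_le_of_le_mul ?_
  rw [Nat.card_eq_fintype_card, Fintype.card_subtype, mul_right_comm]
  refine (Nat.cast_le.2 hcard).trans ?_
  push_cast
  gcongr with l
  exact ncard_hermiteDivisors_le Λ l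

/-- For fixed `n ≥ 2` there is `C > 0`, independent of `p` and `Λ`, such that for every
prime `p` and every positive definite `Λ ∈ M_{n,n}(ℤ)` with `p ∣ det Λ`,
`ν_p(I_{n+1}, Λ) ≤ C · Σ p^{β₂(l) + ⋯ + β_n(l)}`, the sum over all tuples
`(l₁,…,l_n)` of nonnegative integers with `l₁ + ⋯ + l_n ≤ o_p(det Λ)`. -/
theorem nu_bound_divisor (n : ℕ) (hn : 2 ≤ n) :
    ∃ C : ℝ, 0 < C ∧ ∀ (p : ℕ) (Λ : Matrix (Fin n) (Fin n) ℤ),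
      p.Prime → Λ.PosDef → (p : ℤ) ∣ Λ.det →
      nuId p n Λ ≤ ENNReal.ofReal C *
        ∑ l ∈ (Fintype.piFinset fun _ : Fin n =>
            Finset.range (Λ.det.natAbs.factorization p + 1)).filter
              (fun l => ∑ i, l i ≤ Λ.det.natAbs.factorization p),
          epow p (∑ i ∈ Finset.Icc 2 n, betaExp p n Λ l i) := by
  refine ⟨(8 ^ (n + 1)) ^ n, by positivity, fun p Λ hp hΛ _ => ?_⟩
  exact (nu_bound_divisor_general hp (det_ne_zero_of_posDef hΛ)).trans_eq
    (by simp [ENNReal.ofReal_pow, boundedTuples])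
end
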